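/- arXiv:1210.8223 — 2 statements merged into one kernel-verified Lean document; each statement's English description precedes it below -/
import Mathlib

section
/- For every positive integer n, there exists an n×n array A with entries in {1,...,n} such that every row of A is a permutation of {1,...,n}, and for every i with 1 ≤ i ≤ n, the i × ⌈n/i⌉ rectangle in the upper left corner of A contains all n symbols, and likewise for the upper right, lower left, and lower right corners. -/
/-!
Place the symbols into the upper corner rectangles height by height: at stage `j` every symbol has
one row among the first `j` for the left edge and a different one for the right edge. Passing to
stage `j + 1`, each old row hands its surplus symbols over to the new row; as at most half of a row
is surplus, Hall's theorem makes the symbols leaving on the left distinct from those leaving on the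
right. The symbols that a row keeps on one side shrink with `j` and stay disjoint from those on the
other side, so the row can be ordered such that all these sets become initial or final segments.

Stages up to `⌈n / 2⌉` fill the upper half of the array, and the lower half is its reflection with
the first two columns interchanged and the last two as well. Rectangles of width between `2` and
`n - 2` do not notice the interchange. Width 1 occurs only for `i = n`: a symbol confined to the
first two columns in some upper row is in the first column there or in the reflected row.
-/

open Finset

lemma card_filter_mod_eq {j r : ℕ} (hr : r < j) (n : ℕ) :
    #{s : Fin n | (s : ℕ) % j = r} = (n - r) ⌈/⌉ j := by
  have hj : 0 < j := by omega
  have hcount : #{s : Fin n | (s : ℕ) % j = r} = n.count (· ≡ r [MOD j]) := by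
    rw [Nat.count_eq_card_filter_range, card_filter, card_filter,
      ← Fin.sum_univ_eq_sum_range (fun s ↦ if s ≡ r [MOD j] then 1 else 0)]
    simp only [Nat.ModEq, Nat.mod_eq_of_lt hr]
  rw [hcount, Nat.count_modEq_card n hj, Nat.mod_eq_of_lt hr, Nat.ceilDiv_eq_add_pred_div]
  symm
  have hn := Nat.div_add_mod n j
  have hmod := Nat.mod_lt n hj
  split_ifs with h
  all_goals
    apply Nat.div_eq_of_lt_le
    · grind
    · grind

lemma sum_ceilDiv_sub {j : ℕ} (hj : 0 < j) (n : ℕ) : ∑ r ∈ range j, (n - r) ⌈/⌉ j = n := by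
  calc ∑ r ∈ range j, (n - r) ⌈/⌉ j
      = ∑ r ∈ range j, #{s : Fin n | (s : ℕ) % j = r} :=
        sum_congr rfl fun r hr ↦ (card_filter_mod_eq (mem_range.1 hr) n).symm
    _ = #(univ : Finset (Fin n)) :=
        (card_eq_sum_card_fiberwise (f := fun s : Fin n ↦ (s : ℕ) % j) fun s _ ↦
          mem_coe.2 (mem_range.2 (Nat.mod_lt s hj))).symm
    _ = n := card_fin n

lemma lt_ceilDiv_iff_mul_lt {a b c : ℕ} (ha : 0 < a) : c < b ⌈/⌉ a ↔ a * c < b :=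
  lt_iff_lt_of_le_iff_le (ceilDiv_le_iff_le_mul ha)

lemma ceilDiv_le_ceilDiv {a b j k : ℕ} (hj : 0 < j) (hab : a ≤ b) (hjk : j ≤ k) :
    a ⌈/⌉ k ≤ b ⌈/⌉ j := by
  rw [ceilDiv_le_iff_le_mul (by omega)]
  calc a ≤ b := hab
    _ ≤ j * (b ⌈/⌉ j) := le_smul_ceilDiv hj
    _ ≤ k * (b ⌈/⌉ j) := Nat.mul_le_mul_right _ hjk

lemma ceilDiv_le_two_mul_ceilDiv_succ {j : ℕ} (hj : 0 < j) (m : ℕ) :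
    m ⌈/⌉ j ≤ 2 * (m ⌈/⌉ (j + 1)) := by
  rw [ceilDiv_le_iff_le_mul hj]
  calc m ≤ (j + 1) * (m ⌈/⌉ (j + 1)) := le_smul_ceilDiv j.succ_pos
    _ ≤ (j * 2) * (m ⌈/⌉ (j + 1)) := Nat.mul_le_mul_right _ (by omega)
    _ = j * (2 * (m ⌈/⌉ (j + 1))) := mul_assoc ..

lemma sum_card_le_mul_card_biUnion {ι α : Type*} [DecidableEq α] (T : Finset ι)
    (S : ι → Finset α) {k : ℕ} (hk : ∀ a, #{i ∈ T | a ∈ S i} ≤ k) :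
    ∑ i ∈ T, #(S i) ≤ k * #(T.biUnion S) := by
  calc ∑ i ∈ T, #(S i) = ∑ i ∈ T, #{a ∈ T.biUnion S | a ∈ S i} :=
        sum_congr rfl fun i hi ↦ by
          rw [filter_mem_eq_inter, inter_eq_right.2 (subset_biUnion_of_mem S hi)]
    _ = ∑ a ∈ T.biUnion S, #{i ∈ T | a ∈ S i} :=
        sum_card_bipartiteAbove_eq_sum_card_bipartiteBelow fun i a ↦ a ∈ S i
    _ ≤ #(T.biUnion S) • k := sum_le_card_nsmul _ _ _ fun a _ ↦ hk a
    _ = k * #(T.biUnion S) := mul_comm _ _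

lemma exists_disjoint_subsets_card_eq {ι α : Type*} [DecidableEq α] {k : ℕ} (hk : 0 < k)
    (S : ι → Finset α) (hmult : ∀ (T : Finset ι) (a : α), #{i ∈ T | a ∈ S i} ≤ k) (d : ι → ℕ)
    (hd : ∀ i, k * d i ≤ #(S i)) :
    ∃ F : ι → Finset α, (∀ i, F i ⊆ S i) ∧ (∀ i, #(F i) = d i) ∧
      Pairwise fun i i' ↦ Disjoint (F i) (F i') := by
  classical
  have hall (T : Finset (Σ i, Fin (d i))) : #T ≤ #(T.biUnion fun x ↦ S x.1) := by
    set U := T.image Sigma.fst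
    have hTU : #T ≤ ∑ i ∈ U, d i := by
      have hsub : T ⊆ U.sigma fun _ ↦ univ := fun x hx ↦
        mem_sigma.2 ⟨mem_image_of_mem _ hx, mem_univ _⟩
      simpa only [card_sigma, card_fin] using card_le_card hsub
    have hunion : T.biUnion (fun x ↦ S x.1) = U.biUnion S := image_biUnion.symm
    rw [hunion]
    refine Nat.le_of_mul_le_mul_left ?_ hk
    calc k * #T ≤ ∑ i ∈ U, k * d i := by rw [← mul_sum]; exact Nat.mul_le_mul_left k hTU
      _ ≤ ∑ i ∈ U, #(S i) := sum_le_sum fun i _ ↦ hd i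
      _ ≤ k * #(U.biUnion S) := sum_card_le_mul_card_biUnion U S fun a ↦ hmult U a
  obtain ⟨f, hf, hfS⟩ := (all_card_le_biUnion_card_iff_exists_injective _).1 hall
  refine ⟨fun i ↦ univ.image fun c : Fin (d i) ↦ f ⟨i, c⟩, fun i ↦ ?_, fun i ↦ ?_,
    fun i i' hii' ↦ ?_⟩
  · exact image_subset_iff.2 fun c _ ↦ hfS ⟨i, c⟩
  · exact (card_image_of_injective _ (hf.comp sigma_mk_injective)).trans (card_fin _)
  · simp only [disjoint_left, mem_image, mem_univ, true_and]
    rintro _ ⟨c, rfl⟩ ⟨c', hc'⟩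
    exact hii' (congrArg Sigma.fst (hf hc')).symm

lemma exists_disjoint_card_fiber_eq {ι α β : Type*} [Fintype ι] [Nonempty ι] [Fintype α]
    [DecidableEq β] (f : ι → α → β) (d : ι → β → ℕ)
    (hd : ∀ i r, Fintype.card ι * d i r ≤ #{a | f i a = r}) :
    ∃ E : ι → Finset α, (Pairwise fun i i' ↦ Disjoint (E i) (E i')) ∧
      ∀ i r, #{a ∈ E i | f i a = r} = d i r := by
  classical
  have hmult (T : Finset (ι × β)) (a : α) :
      #{v ∈ T | a ∈ ({a | f v.1 a = v.2} : Finset α)} ≤ Fintype.card ι := by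
    refine card_le_card_of_injOn Prod.fst (fun _ _ ↦ mem_coe.2 (mem_univ _)) ?_
    rintro ⟨i, r⟩ hr ⟨i', r'⟩ hr' (rfl : i = i')
    simp only [coe_filter, Set.mem_ofPred_eq, mem_filter, mem_univ, true_and] at hr hr'
    rw [← hr.2, ← hr'.2]
  obtain ⟨F, hFS, hFcard, hFdisj⟩ := exists_disjoint_subsets_card_eq Fintype.card_pos
    (fun v : ι × β ↦ ({a | f v.1 a = v.2} : Finset α)) hmult (fun v ↦ d v.1 v.2)
    fun v ↦ hd v.1 v.2
  refine ⟨fun i ↦ {a | a ∈ F (i, f i a)}, fun i i' hii' ↦ ?_, fun i r ↦ ?_⟩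
  · simp only [disjoint_left, mem_filter, mem_univ, true_and]
    exact fun a ↦ (disjoint_left.1 (hFdisj (fun h ↦ hii' (congrArg Prod.fst h))) ·)
  · rw [← hFcard (i, r)]
    congr 1
    ext a
    simp only [mem_filter, mem_univ, true_and]
    refine ⟨fun ⟨ha, hr⟩ ↦ hr ▸ ha, fun ha ↦ ?_⟩
    have hr : f i a = r := (mem_filter.1 (hFS (i, r) ha)).2
    exact ⟨hr.symm ▸ ha, hr⟩

lemma exists_equiv_fin_of_isChain {α : Type*} [Fintype α] {C : Set (Finset α)}
    (hC : IsChain (· ⊆ ·) C) :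
    ∃ e : α ≃ Fin (Fintype.card α), ∀ X ∈ C, ∀ a, a ∈ X ↔ e a < #X := by
  classical
  let key (a : α) : ℕ := #{Y ∈ C.toFinset | a ∉ Y}
  have mem_iff {X : Finset α} (hX : X ∈ C) (a : α) :
      a ∈ X ↔ key a ≤ #{Y ∈ C.toFinset | Y ⊂ X} := by
    refine ⟨fun ha ↦ card_le_card fun Y hY ↦ ?_, fun hle ↦ ?_⟩
    · simp only [mem_filter, Set.mem_toFinset] at hY ⊢
      refine ⟨hY.1, (hC.total hY.1 hX).elim (fun h ↦ ⟨h, fun h' ↦ hY.2 (h' ha)⟩)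
        fun h ↦ absurd (h ha) hY.2⟩
    · by_contra ha
      refine hle.not_gt (card_lt_card ⟨fun Y hY ↦ ?_, fun h ↦ ?_⟩)
      · simp only [mem_filter] at hY ⊢
        exact ⟨hY.1, fun h ↦ ha (hY.2.subset h)⟩
      · exact (mem_filter.1 (h (mem_filter.2 ⟨Set.mem_toFinset.2 hX, ha⟩))).2.ne rfl
  let e₀ := Fintype.equivFin α
  let e : α ≃ Fin (Fintype.card α) := e₀.trans (Tuple.sort (key ∘ e₀.symm)).symm
  have hmono : Monotone (key ∘ e.symm) := Tuple.monotone_sort (key ∘ e₀.symm)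
  refine ⟨e, fun X hX a ↦ ?_⟩
  have hcard : #{p | (key ∘ e.symm) p ≤ #{Y ∈ C.toFinset | Y ⊂ X}} = #X := by
    simp only [Function.comp_apply, ← mem_iff hX]
    exact card_bij' (fun p _ ↦ e.symm p) (fun a _ ↦ e a) (by simp) (by simp) (by simp) (by simp)
  rw [mem_iff hX, ← hcard, Tuple.lt_card_le_iff_apply_le_of_monotone hmono,
    Function.comp_apply, e.symm_apply_apply]

lemma exists_perm_of_antitone_of_disjoint {ι : Type*} [LinearOrder ι] {n : ℕ}
    {U V : ι → Finset (Fin n)} (hU : Antitone U) (hV : Antitone V)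
    (hUV : ∀ i j, Disjoint (U i) (V j)) :
    ∃ σ : Equiv.Perm (Fin n), ∀ i, (∀ s ∈ U i, σ s < #(U i)) ∧
      ∀ s ∈ V i, (σ s).rev < #(V i) := by
  have hC : IsChain (· ⊆ ·) (Set.range U ∪ Set.range fun i ↦ (V i)ᶜ) := by
    have hUVc (i j) : U i ⊆ (V j)ᶜ := subset_compl_iff_disjoint_right.2 (hUV i j)
    rintro _ (⟨i, rfl⟩ | ⟨i, rfl⟩) _ (⟨j, rfl⟩ | ⟨j, rfl⟩) -
    · exact (le_total i j).symm.imp (hU ·) (hU ·)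
    · exact .inl (hUVc i j)
    · exact .inr (hUVc j i)
    · exact (le_total i j).imp (compl_subset_compl.2 <| hV ·) (compl_subset_compl.2 <| hV ·)
  obtain ⟨e, he⟩ := exists_equiv_fin_of_isChain hC
  refine ⟨e.trans (finCongr (Fintype.card_fin n)), fun i ↦ ⟨fun s hs ↦ ?_, fun s hs ↦ ?_⟩⟩
  · exact (he _ (.inl ⟨i, rfl⟩) s).1 hs
  · have hpos := (he _ (.inr ⟨i, rfl⟩) s).not.1 (fun h ↦ mem_compl.1 h hs)
    have hle := card_le_univ (V i)
    simp only [card_compl, Fintype.card_fin] at hpos hle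
    simp only [Fin.val_rev, Equiv.trans_apply, finCongr_apply, Fin.val_cast]
    have hlt := (e s).is_lt
    simp only [Fintype.card_fin] at hlt
    omega

/-- Stage `j` of the placement of the symbols in the corner rectangles: `f true s` and `f false s`
are the rows among `0, …, j - 1` in which the symbol `s` occurs close to the left and to the right
edge. Row `r` receives `⌈(n - r) / j⌉` symbols on either side, except that at stage 2 the numbers
for rows 0 and 1 may be interchanged; otherwise `ne` would fail for odd `n`. -/
structure IsStage (n j : ℕ) (f : Bool → Fin n → ℕ) : Prop where
  lt : ∀ b s, f b s < j
  ne : ∀ s, f true s ≠ f false s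
  card_fiber : ∀ b, ∀ r < j, #{s | f b s = r} = (n - r) ⌈/⌉ j ∨
    j = 2 ∧ #{s | f b s = r} = (n - (1 - r)) ⌈/⌉ j

namespace IsStage

variable {n j : ℕ} {f : Bool → Fin n → ℕ}

lemma card_fiber_le (hf : IsStage n j f) (b : Bool) {r : ℕ} (hr : r < j) :
    #{s | f b s = r} ≤ n ⌈/⌉ j := by
  obtain h | ⟨-, h⟩ := hf.card_fiber b r hr <;> rw [h]
  all_goals exact ceilDiv_le_ceilDiv (by omega) (Nat.sub_le _ _) le_rfl

lemma card_fiber_bounds (hn : 2 ≤ n) (hf : IsStage n j f) (b : Bool) {r : ℕ} (hr : r < j) :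
    (n - r) ⌈/⌉ (j + 1) ≤ #{s | f b s = r} ∧
      #{s | f b s = r} ≤ 2 * ((n - r) ⌈/⌉ (j + 1)) := by
  obtain h | ⟨rfl, h⟩ := hf.card_fiber b r hr <;> rw [h]
  · exact ⟨ceilDiv_le_ceilDiv (by omega) le_rfl j.le_succ,
      ceilDiv_le_two_mul_ceilDiv_succ (by omega) _⟩
  · simp only [Nat.ceilDiv_eq_add_pred_div]
    omega

lemma two (n : ℕ) : IsStage n 2 fun b s ↦ if b then s % 2 else (s + 1) % 2 where
  lt b s := by cases b <;> exact Nat.mod_lt _ two_pos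
  ne s := by simp only [if_true, Bool.false_eq_true, if_false]; omega
  card_fiber b r hr := by
    cases b
    · refine .inr ⟨rfl, ?_⟩
      rw [← card_filter_mod_eq (show 1 - r < 2 by omega) n]
      congr 1
      ext s
      simp only [Bool.false_eq_true, if_false, mem_filter, mem_univ, true_and]
      omega
    · exact .inl (card_filter_mod_eq hr n)

/-- The sizes of the old rows determine that of the new one. -/
lemma of_card_fiber_eq (hf : ∀ b s, f b s < j + 1) (hne : ∀ s, f true s ≠ f false s)
    (hcard : ∀ b, ∀ r < j, #{s | f b s = r} = (n - r) ⌈/⌉ (j + 1)) : IsStage n (j + 1) f where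
  lt := hf
  ne := hne
  card_fiber b r hr := by
    left
    obtain hrj | rfl := Nat.lt_succ_iff_lt_or_eq.1 hr
    · exact hcard b r hrj
    have htotal : ∑ i ∈ range (r + 1), #{s | f b s = i} = n :=
      (card_eq_sum_card_fiberwise fun s _ ↦ mem_coe.2 (mem_range.2 (hf b s))).symm.trans
        (card_fin n)
    have hsum := htotal.trans (sum_ceilDiv_sub r.succ_pos n).symm
    rw [sum_range_succ, sum_range_succ,
      sum_congr rfl fun i hi ↦ hcard b i (mem_range.1 hi)] at hsum
    exact Nat.add_left_cancel hsum

lemma exists_succ (hn : 2 ≤ n) (hf : IsStage n j f) :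
    ∃ g, IsStage n (j + 1) g ∧ ∀ b s, g b s = f b s ∨ g b s = j := by
  let surplus (b : Bool) (r : ℕ) : ℕ := #{s | f b s = r} - (n - r) ⌈/⌉ (j + 1)
  have hsurplus (b r) : Fintype.card Bool * surplus b r ≤ #{s | f b s = r} := by
    rw [Fintype.card_bool]
    dsimp only [surplus]
    by_cases hr : r < j
    · have := (hf.card_fiber_bounds hn b hr).2
      omega
    · have hempty : #{s | f b s = r} = 0 := by
        rw [card_eq_zero, filter_eq_empty_iff]
        exact fun s _ hs ↦ hr (hs ▸ hf.lt b s)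
      omega
  obtain ⟨E, hdisj, hcard⟩ := exists_disjoint_card_fiber_eq f surplus hsurplus
  let g (b : Bool) (s : Fin n) : ℕ := if s ∈ E b then j else f b s
  have hg (b s) : g b s = f b s ∨ g b s = j := (ite_eq_or_eq ..).symm
  refine ⟨g, of_card_fiber_eq (fun b s ↦ ?_) (fun s ↦ ?_) (fun b r hr ↦ ?_), hg⟩
  · have := hf.lt b s
    have := hg b s
    omega
  · have hnot : ¬ (s ∈ E true ∧ s ∈ E false) := fun h ↦
      disjoint_left.1 (hdisj (by decide : true ≠ false)) h.1 h.2
    have := hf.ne s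
    have := hf.lt true s
    have := hf.lt false s
    grind
  · have hfiber : ({s | g b s = r} : Finset (Fin n)) =
        ({s | f b s = r} : Finset (Fin n)) \ {s ∈ E b | f b s = r} := by
      ext s
      simp only [mem_filter, mem_univ, true_and, mem_sdiff, g]
      grind
    rw [hfiber, card_sdiff_of_subset (filter_subset_filter _ (subset_univ _)), hcard,
      Nat.sub_sub_self (hf.card_fiber_bounds hn b hr).1]

end IsStage

lemma exists_stages {n : ℕ} (hn : 2 ≤ n) :
    ∃ f : ℕ → Bool → Fin n → ℕ, (∀ k, IsStage n (k + 2) (f k)) ∧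
      ∀ k b s, f (k + 1) b s = f k b s ∨ f (k + 1) b s = k + 2 := by
  choose! next hnext hmove using fun j (f : Bool → Fin n → ℕ) (hf : IsStage n j f) ↦
    hf.exists_succ hn
  let f (k : ℕ) : Bool → Fin n → ℕ := k.rec (fun b s ↦ if b then s % 2 else (s + 1) % 2)
    fun k ↦ next (k + 2)
  have hf (k) : IsStage n (k + 2) (f k) := by
    induction k with
    | zero => exact .two n
    | succ k ih => exact hnext _ _ ih
  exact ⟨f, hf, fun k ↦ hmove _ _ (hf k)⟩

/-- The distance of a column from the left (`true`) or the right (`false`) edge. -/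
def fromEdge {n : ℕ} (b : Bool) : Equiv.Perm (Fin n) := if b then Equiv.refl _ else Fin.revPerm

lemma exists_perm_fromEdge_lt_card_fiber {n : ℕ} {f : ℕ → Bool → Fin n → ℕ}
    (hf : ∀ k, IsStage n (k + 2) (f k))
    (hmove : ∀ k b s, f (k + 1) b s = f k b s ∨ f (k + 1) b s = k + 2) (r : ℕ) :
    ∃ σ : Equiv.Perm (Fin n), ∀ k, r < k + 2 → ∀ b s, f k b s = r →
      (fromEdge b (σ s) : ℕ) < #{s' | f k b s' = r} := by
  -- Row `r` first exists at stage `max (r + 1) 2`, whose index is `r - 1` (truncated).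
  let X (b : Bool) (k : ℕ) : Finset (Fin n) := {s | f (r - 1 + k) b s = r}
  have hX (b : Bool) : Antitone (X b) := antitone_nat_of_succ_le fun k s hs ↦ by
    simp only [X, mem_filter, mem_univ, true_and] at hs ⊢
    have := hmove (r - 1 + k) b s
    grind
  have hdisj : Disjoint (X true 0) (X false 0) := disjoint_left.2 fun s hs hs' ↦
    (hf (r - 1 + 0)).ne s ((mem_filter.1 hs).2.trans (mem_filter.1 hs').2.symm)
  obtain ⟨σ, hσ⟩ := exists_perm_of_antitone_of_disjoint (hX true) (hX false) fun i j ↦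
    hdisj.mono (hX true i.zero_le) (hX false j.zero_le)
  refine ⟨σ, fun k hk b s hs ↦ ?_⟩
  obtain ⟨i, rfl⟩ : ∃ i, k = r - 1 + i := Nat.exists_eq_add_of_le (by omega)
  have hmem : s ∈ X b i := mem_filter.2 ⟨mem_univ s, hs⟩
  cases b
  · exact (hσ i).2 s hmem
  · exact (hσ i).1 s hmem

/-- Both upper corner rectangles of every height `j ≥ 2` contain all symbols, where `σ r s` is the
column of the symbol `s` in row `r`, everything being counted from 0. For `j > 2` only the first
`⌈(n - r) / j⌉` columns of row `r` are used. -/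
def CoversUpperCorners (n : ℕ) (σ : ℕ → Equiv.Perm (Fin n)) : Prop :=
  ∀ j, 2 ≤ j → ∀ b s, ∃ r < j, (fromEdge b (σ r s) : ℕ) < n ⌈/⌉ j ∧
    (2 < j → (fromEdge b (σ r s) : ℕ) < (n - r) ⌈/⌉ j)

lemma exists_coversUpperCorners {n : ℕ} (hn : 2 ≤ n) :
    ∃ σ, CoversUpperCorners n σ := by
  obtain ⟨f, hf, hmove⟩ := exists_stages hn
  choose σ hσ using exists_perm_fromEdge_lt_card_fiber hf hmove
  refine ⟨σ, fun j hj b s ↦ ?_⟩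
  obtain ⟨k, rfl⟩ : ∃ k, j = k + 2 := ⟨j - 2, by omega⟩
  have hr := (hf k).lt b s
  have hlt := hσ _ k hr b s rfl
  refine ⟨f k b s, hr, hlt.trans_le ((hf k).card_fiber_le b hr), fun hk ↦ ?_⟩
  obtain h | ⟨h, -⟩ := (hf k).card_fiber b _ hr
  · rwa [h] at hlt
  · omega

/-- The involution of the columns that interchanges the first two and the last two. -/
def swapEnds {n : ℕ} (hn : 4 ≤ n) : Equiv.Perm (Fin n) :=
  Function.Involutive.toPerm
    (fun x ↦ ⟨if (x : ℕ) < 2 then 1 - (x : ℕ) else if n ≤ x + 2 then 2 * n - 3 - x else x,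
      by grind⟩)
    fun x ↦ by ext; dsimp only; grind

section swapEnds

variable {n : ℕ} (hn : 4 ≤ n)

lemma val_swapEnds (x : Fin n) : (swapEnds hn x : ℕ) =
    if (x : ℕ) < 2 then 1 - (x : ℕ) else if n ≤ x + 2 then 2 * n - 3 - x else x := rfl

lemma fromEdge_swapEnds (b : Bool) (x : Fin n) :
    fromEdge b (swapEnds hn x) = swapEnds hn (fromEdge b x) := by
  cases b
  · ext
    simp only [fromEdge, Bool.false_eq_true, if_false, Fin.revPerm_apply, Fin.val_rev, val_swapEnds]
    grind
  · rfl

lemma swapEnds_lt {x : Fin n} {w : ℕ} (hw : 2 ≤ w) (hwn : w + 2 ≤ n) (hx : x < w) :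
    swapEnds hn x < w := by
  rw [val_swapEnds]
  grind

end swapEnds

/-- Completes the rows of the upper half of an `n`-rowed array: row `n - 1 - r` is row `r` with
its columns permuted by `τ`; the middle row of an odd number of rows is kept. -/
def reflectRows {n : ℕ} (τ : Equiv.Perm (Fin n)) (σ : ℕ → Equiv.Perm (Fin n)) (r : ℕ) :
    Equiv.Perm (Fin n) :=
  if 2 * r < n then σ r else (σ (n - 1 - r)).trans τ

lemma reflectRows_of_lt {n r : ℕ} {τ : Equiv.Perm (Fin n)} {σ : ℕ → Equiv.Perm (Fin n)}
    (hr : 2 * r < n) : reflectRows τ σ r = σ r := if_pos hr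

lemma reflectRows_sub {n r : ℕ} {τ : Equiv.Perm (Fin n)} {σ : ℕ → Equiv.Perm (Fin n)}
    (hr : 2 * r + 1 < n) : reflectRows τ σ (n - 1 - r) = (σ r).trans τ := by
  rw [reflectRows, if_neg (by omega), Nat.sub_sub_self (by omega)]

/-- The corner rectangle condition, in terms of the column `pos r s` of the symbol `s` in row `r`
(rows, columns and symbols counted from 0). -/
def CoversCorners (n : ℕ) (pos : ℕ → Equiv.Perm (Fin n)) : Prop :=
  ∀ i ∈ Icc 1 n, ∀ b s, (∃ r < i, (fromEdge b (pos r s) : ℕ) < n ⌈/⌉ i) ∧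
    ∃ r < i, (fromEdge b (pos (n - 1 - r) s) : ℕ) < n ⌈/⌉ i

lemma exists_coversCorners_of_le_three {n : ℕ} (hn : n ≤ 3) : ∃ pos, CoversCorners n pos := by
  unfold CoversCorners
  interval_cases n
  · exact ⟨fun _ ↦ Equiv.refl _, by decide⟩
  · exact ⟨fun _ ↦ Equiv.refl _, by decide⟩
  · exact ⟨fun r ↦ if r = 0 then Equiv.refl _ else Equiv.swap 0 1, by decide⟩
  · exact ⟨fun r ↦ finRotate 3 ^ r, by decide⟩

section reflection

variable {n : ℕ} {σ : ℕ → Equiv.Perm (Fin n)}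

/-- Half of the rows put every symbol into the first two columns, and the reflected rows
interchange these. -/
lemma exists_reflectRows_eq_zero (hn : 4 ≤ n) (hσ : CoversUpperCorners n σ) (b : Bool) (s : Fin n) :
    ∃ r < n, (fromEdge b (reflectRows (swapEnds hn) σ r s) : ℕ) = 0 := by
  obtain ⟨r, hr, htwo, hlast⟩ := hσ ((n + 1) / 2) (by omega) b s
  replace htwo : (fromEdge b (σ r s) : ℕ) < 2 :=
    htwo.trans_le ((ceilDiv_le_iff_le_mul (by omega)).2 (by omega))
  obtain hzero | hone : (fromEdge b (σ r s) : ℕ) = 0 ∨ (fromEdge b (σ r s) : ℕ) = 1 := by omega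
  · exact ⟨r, by omega, by rwa [reflectRows_of_lt (by omega)]⟩
  · have hmiddle : 2 * r + 1 ≠ n := fun h ↦ by
      have hle : (n - r) ⌈/⌉ ((n + 1) / 2) ≤ 1 :=
        (ceilDiv_le_iff_le_mul (by omega)).2 (by omega)
      have := hlast (by omega)
      omega
    refine ⟨n - 1 - r, by omega, ?_⟩
    rw [reflectRows_sub (by omega), Equiv.trans_apply, fromEdge_swapEnds, val_swapEnds, hone]
    rfl

lemma ceilDiv_min_half_le {i : ℕ} (hi : 0 < i) (hin : i < n) :
    n ⌈/⌉ min i ((n + 1) / 2) ≤ n ⌈/⌉ i := by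
  obtain h | h := le_total i ((n + 1) / 2)
  · rw [min_eq_left h]
  · have htwo : 1 < n ⌈/⌉ i := (lt_ceilDiv_iff_mul_lt hi).2 (by omega)
    rw [min_eq_right h]
    exact ((ceilDiv_le_iff_le_mul (by omega)).2 (by omega)).trans htwo

lemma coversCorners_reflectRows (hn : 4 ≤ n) (hσ : CoversUpperCorners n σ) :
    CoversCorners n (reflectRows (swapEnds hn) σ) := by
  intro i hi b s
  obtain ⟨hi₁, hin⟩ := mem_Icc.1 hi
  obtain rfl | hi₂ := hi₁.eq_or_lt
  · simp
  obtain rfl | hin := hin.eq_or_lt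
  · obtain ⟨r, hr, hzero⟩ := exists_reflectRows_eq_zero hn hσ b s
    have hpos : 0 < i ⌈/⌉ i := (lt_ceilDiv_iff_mul_lt hi₁).2 (by omega)
    refine ⟨⟨r, hr, hzero.trans_lt hpos⟩, i - 1 - r, by omega, ?_⟩
    rw [Nat.sub_sub_self (by omega)]
    exact hzero.trans_lt hpos
  obtain ⟨r, hr, hlt, -⟩ := hσ (min i ((n + 1) / 2)) (by omega) b s
  replace hlt := hlt.trans_le (ceilDiv_min_half_le hi₁ hin)
  have htop : reflectRows (swapEnds hn) σ r = σ r := reflectRows_of_lt (by omega)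
  refine ⟨⟨r, by omega, by rwa [htop]⟩, r, by omega, ?_⟩
  by_cases hmiddle : 2 * r + 1 = n
  · rwa [show n - 1 - r = r by omega, htop]
  · rw [reflectRows_sub (by omega), Equiv.trans_apply, fromEdge_swapEnds]
    have htwo : 1 < n ⌈/⌉ i := (lt_ceilDiv_iff_mul_lt hi₁).2 (by omega)
    have hwidth : n ⌈/⌉ i ≤ n - 2 :=
      (ceilDiv_le_ceilDiv two_pos le_rfl hi₂).trans
        ((ceilDiv_le_iff_le_mul two_pos).2 (by omega))
    exact swapEnds_lt hn htwo (by omega) hlt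

end reflection

lemma exists_coversCorners (n : ℕ) : ∃ pos, CoversCorners n pos := by
  obtain hn | hn := lt_or_ge n 4
  · exact exists_coversCorners_of_le_three (by omega)
  · obtain ⟨σ, hσ⟩ := exists_coversUpperCorners (show 2 ≤ n by omega)
    exact ⟨_, coversCorners_reflectRows hn hσ⟩

/-- A permutation of `0, …, n - 1` as a function on `1, …, n`; elsewhere the value is irrelevant. -/
def oneBased {n : ℕ} (σ : Equiv.Perm (Fin n)) (c : ℕ) : ℕ :=
  if h : c - 1 < n then σ ⟨c - 1, h⟩ + 1 else 0

section oneBased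

variable {n : ℕ} (σ : Equiv.Perm (Fin n))

lemma oneBased_val_add_one (p : Fin n) : oneBased σ (p + 1) = σ p + 1 := dif_pos p.is_lt

lemma exists_val_add_one_eq {c : ℕ} (hc : c ∈ Icc 1 n) : ∃ p : Fin n, (p : ℕ) + 1 = c := by
  rw [mem_Icc] at hc
  exact ⟨⟨c - 1, by omega⟩, by simp only; omega⟩

lemma mapsTo_oneBased : Set.MapsTo (oneBased σ) (Icc 1 n) (Icc 1 n) := by
  intro c hc
  obtain ⟨p, rfl⟩ := exists_val_add_one_eq hc
  rw [oneBased_val_add_one, mem_coe, mem_Icc]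
  omega

lemma leftInvOn_oneBased_symm : Set.LeftInvOn (oneBased σ.symm) (oneBased σ) (Icc 1 n) := by
  intro c hc
  obtain ⟨p, rfl⟩ := exists_val_add_one_eq hc
  rw [oneBased_val_add_one, oneBased_val_add_one, σ.symm_apply_apply]

lemma bijOn_oneBased : Set.BijOn (oneBased σ) (Icc 1 n) (Icc 1 n) :=
  Set.InvOn.bijOn ⟨leftInvOn_oneBased_symm σ, leftInvOn_oneBased_symm σ.symm⟩
    (mapsTo_oneBased σ) (mapsTo_oneBased σ.symm)

lemma exists_oneBased_symm_eq {w : ℕ} (s : Fin n) (hs : (fromEdge true (σ s) : ℕ) < w) :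
    ∃ c ∈ Icc 1 w, oneBased σ.symm c = s + 1 :=
  ⟨σ s + 1, mem_Icc.2 ⟨Nat.le_add_left .., hs⟩,
    by rw [oneBased_val_add_one, σ.symm_apply_apply]⟩

lemma exists_oneBased_symm_sub_eq {w : ℕ} (s : Fin n) (hs : (fromEdge false (σ s) : ℕ) < w) :
    ∃ c ∈ Icc 1 w, oneBased σ.symm (n + 1 - c) = s + 1 := by
  refine ⟨(σ s).rev + 1, mem_Icc.2 ⟨Nat.le_add_left .., hs⟩, ?_⟩
  have hcol : n + 1 - ((σ s).rev + 1) = (σ s : ℕ) + 1 := by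
    rw [Fin.val_rev]
    omega
  rw [hcol, oneBased_val_add_one, σ.symm_apply_apply]

end oneBased

/-- For every positive integer `n`, there exists a type-1,2,3,4 retransmission
permutation array of order `n`: an `n × n` array (rows/columns indexed `1..n`)
each of whose rows is a permutation of `{1,…,n}`, such that for each `1 ≤ i ≤ n`
the `i × ⌈n/i⌉` rectangles anchored in the four corners each contain all `n`
symbols.  Here `⌈n/i⌉ = (n + i - 1) / i`. -/
theorem exists_type1234_RPA (n : ℕ) (hn : 0 < n) :
    ∃ A : ℕ → ℕ → ℕ,
      (∀ i ∈ Finset.Icc 1 n,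
        Set.BijOn (A i) ↑(Finset.Icc 1 n) ↑(Finset.Icc 1 n)) ∧
      (∀ i ∈ Finset.Icc 1 n, ∀ s ∈ Finset.Icc 1 n,
        (∃ r ∈ Finset.Icc 1 i, ∃ c ∈ Finset.Icc 1 ((n + i - 1) / i),
            A r c = s) ∧
        (∃ r ∈ Finset.Icc 1 i, ∃ c ∈ Finset.Icc 1 ((n + i - 1) / i),
            A r (n + 1 - c) = s) ∧
        (∃ r ∈ Finset.Icc 1 i, ∃ c ∈ Finset.Icc 1 ((n + i - 1) / i),
            A (n + 1 - r) c = s) ∧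
        (∃ r ∈ Finset.Icc 1 i, ∃ c ∈ Finset.Icc 1 ((n + i - 1) / i),
            A (n + 1 - r) (n + 1 - c) = s)) := by
  obtain ⟨pos, hpos⟩ := exists_coversCorners n
  refine ⟨fun r ↦ oneBased (pos (r - 1)).symm, fun r _ ↦ bijOn_oneBased _, fun i hi s hs ↦ ?_⟩
  obtain ⟨p, rfl⟩ := exists_val_add_one_eq hs
  obtain ⟨⟨r₁, hr₁, h₁⟩, r₃, hr₃, h₃⟩ := hpos i hi true p
  obtain ⟨⟨r₂, hr₂, h₂⟩, r₄, hr₄, h₄⟩ := hpos i hi false p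
  have hbot (r : ℕ) : n + 1 - (r + 1) - 1 = n - 1 - r := by omega
  refine ⟨⟨r₁ + 1, by simpa using hr₁, exists_oneBased_symm_eq _ p h₁⟩,
    ⟨r₂ + 1, by simpa using hr₂, exists_oneBased_symm_sub_eq _ p h₂⟩,
    ⟨r₃ + 1, by simpa using hr₃, ?_⟩, ⟨r₄ + 1, by simpa using hr₄, ?_⟩⟩
  · simp only [hbot]
    exact exists_oneBased_symm_eq _ p h₃
  · simp only [hbot]
    exact exists_oneBased_symm_sub_eq _ p h₄
end

section
/- For every positive integer n, there exists an n×n latin square A on symbols {1,...,n} such that for every i with 1 ≤ i ≤ n, the i × ⌈n/i⌉ rectangle in the upper left corner of A contains all n symbols, and the i × ⌈n/i⌉ rectangle in the upper right corner of A contains all n symbols. -/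
/-!
For each `t` the staircase `{(r, c) | r + t * c < n}` has `n` cells in the first `t` rows, all of
them inside the top-left `t × ⌈n/t⌉` rectangle. A latin square is built row by row so that, at every
time `t ≤ n/2`, both this staircase and its mirror image carry every symbol exactly once; row `i`
then has to put prescribed symbols into its outermost `⌊n/(i+1)⌋` cells on either side. The
prescriptions of the two corners never compete as long as the fringe that leaves the left staircase
between two times shares no symbol with the fringe that leaves the right one, and a fringe is small
enough for each side to keep this up. Hall's theorem fills the middle of the row.

If `n = 2 * k + 1`, each corner lacks exactly one symbol in row `k`, and each of them may go to
either of the two outermost columns, which is enough freedom for Hall's theorem. Once `n ≤ 2 * t`,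
the rectangles have at most two columns and the earlier ones already contain all symbols, so that
any completion of the latin rectangle will do. The counting needs `n ≥ 10`; smaller orders have
explicit tables.
-/

namespace LRPA

open Finset Function

section Hall

variable {α β : Type*}

theorem exists_injOn_of_card_conflicts_le [Nonempty β] {S : Finset α} {T : Finset β}
    (hST : #S ≤ #T) (C : α → β → Prop) [DecidableRel C]
    (hC : ∀ a ∈ S, ∀ b ∈ T, C a b → #{b' ∈ T | C a b'} + #{a' ∈ S | C a' b} ≤ #T) :
    ∃ f : α → β, Set.InjOn f S ∧ ∀ a ∈ S, f a ∈ T ∧ ¬ C a (f a) := by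
  classical
  let t : S → Finset β := fun a => {b ∈ T | ¬ C a b}
  have hall : ∀ X : Finset S, #X ≤ #(X.biUnion t) := by
    intro X
    by_contra! hX
    have hXS : #X ≤ #S := X.card_le_univ.trans_eq (Fintype.card_coe S)
    obtain ⟨b, hbT, hb⟩ := exists_mem_notMem_of_card_lt_card (hX.trans_le (hXS.trans hST))
    have hconf : ∀ a ∈ X, C a b := by
      simpa [t, hbT] using hb
    obtain ⟨a, haX⟩ : X.Nonempty := card_pos.mp (by lia)
    have hX_le : #X ≤ #{a' ∈ S | C a' b} :=
      card_le_card_of_injOn Subtype.val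
        (fun a' ha' => mem_coe.mpr (mem_filter.mpr ⟨a'.2, hconf a' ha'⟩))
        Subtype.val_injective.injOn
    have ht_le : #(t a) ≤ #(X.biUnion t) := card_le_card (subset_biUnion_of_mem t haX)
    have hsplit : #{b' ∈ T | C a b'} + #(t a) = #T :=
      card_filter_add_card_filter_not _
    have := hC a a.2 b hbT (hconf a haX)
    lia
  obtain ⟨f, hf, hft⟩ := (all_card_le_biUnion_card_iff_exists_injective t).mp hall
  have hext : ∀ a : S, extend Subtype.val f (fun _ => Classical.arbitrary β) a = f a :=
    Subtype.val_injective.extend_apply f _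
  refine ⟨extend Subtype.val f fun _ => Classical.arbitrary β, fun a ha b hb hab => ?_,
    fun a ha => ?_⟩
  · exact congrArg Subtype.val (hf ((hext ⟨a, ha⟩).symm.trans (hab.trans (hext ⟨b, hb⟩))))
  · rw [hext ⟨a, ha⟩]
    exact mem_filter.mp (hft ⟨a, ha⟩)

theorem exists_injective_of_degree [Fintype α] [DecidableEq β] {m : ℕ} (hm : 0 < m)
    {t : α → Finset β} (h_le : ∀ a, m ≤ #(t a)) (h_ge : ∀ b, #{a | b ∈ t a} ≤ m) :
    ∃ f : α → β, Injective f ∧ ∀ a, f a ∈ t a := by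
  refine (all_card_le_biUnion_card_iff_exists_injective t).mp fun X => ?_
  refine Nat.le_of_mul_le_mul_right
    (card_mul_le_card_mul (fun a b => b ∈ t a) (m := m) (fun a ha => ?_) fun b _ => ?_) hm
  · refine (h_le a).trans (card_le_card fun b hb => ?_)
    exact mem_filter.mpr ⟨mem_biUnion.mpr ⟨a, ha, hb⟩, hb⟩
  · exact (card_le_card (filter_subset_filter _ (subset_univ X))).trans (h_ge b)

theorem min_card_le_card_biUnion [DecidableEq β] {m : ℕ} {t : α → Finset β}
    {x y : α} (h : ∀ a, a ≠ x → a ≠ y → m ≤ #(t a)) (hx : 2 ≤ #(t x)) (hy : 2 ≤ #(t y))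
    (X : Finset α) : min #X m ≤ #(X.biUnion t) := by
  classical
  have hle : ∀ a ∈ X, #(t a) ≤ #(X.biUnion t) := fun a ha =>
    card_le_card (subset_biUnion_of_mem t ha)
  have hpair : #({x, y} : Finset α) ≤ 2 := card_le_two
  by_cases hX : #X ≤ #({x, y} : Finset α)
  · obtain rfl | ⟨a, ha⟩ := X.eq_empty_or_nonempty
    · simp only [card_empty, zero_le, inf_of_le_left]
    · have := hle a ha
      by_cases hax : a = x
      · subst hax; lia
      by_cases hay : a = y
      · subst hay; lia
      have := h a hax hay
      lia
  · obtain ⟨a, ha, hxy⟩ := exists_mem_notMem_of_card_lt_card (not_le.mp hX)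
    rw [mem_insert, mem_singleton, not_or] at hxy
    exact (min_le_right _ _).trans ((h a hxy.1 hxy.2).trans (hle a ha))

theorem sdiff_pair_subset_filter_notMem [Fintype α] [DecidableEq α] [DecidableEq β]
    {G t : α → Finset β} {x y : α} (hteq : ∀ a, a ≠ x → a ≠ y → t a = G a) {X : Finset α} {c : β}
    (hc : c ∉ X.biUnion t) : X \ {x, y} ⊆ ({a | c ∉ G a} : Finset α) := by
  intro a ha
  simp only [mem_sdiff, mem_insert, mem_singleton, not_or] at ha
  refine mem_filter.mpr ⟨mem_univ a, fun h => hc (mem_biUnion.mpr ⟨a, ha.1, ?_⟩)⟩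
  rwa [hteq a ha.2.1 ha.2.2]

theorem exists_injective_of_regular_of_two_restricted [Fintype α] [Fintype β] [DecidableEq β]
    {k : ℕ} (hα : Fintype.card α = 2 * k + 1) (hβ : Fintype.card β = 2 * k + 1)
    {G t : α → Finset β} (hG : ∀ a, #(G a) = k + 1) (hG' : ∀ b, #{a | b ∈ G a} = k + 1)
    {x y : α} (ht : t x ⊆ G x) (hteq : ∀ a, a ≠ x → a ≠ y → t a = G a)
    (hx : 2 ≤ #(t x)) (hy : 2 ≤ #(t y)) :
    ∃ f : α → β, Injective f ∧ ∀ a, f a ∈ t a := by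
  classical
  refine (all_card_le_biUnion_card_iff_exists_injective t).mp fun X => ?_
  by_contra! hX
  set N := X.biUnion t
  have hXcard : #X ≤ 2 * k + 1 := hα ▸ X.card_le_univ
  have hNc : #N + #Nᶜ = 2 * k + 1 := by rw [card_add_card_compl, hβ]
  have hN : min #X (k + 1) ≤ #N :=
    min_card_le_card_biUnion (fun a hax hay => (hteq a hax hay ▸ hG a).ge) hx hy X
  have hXxy : #X ≤ #(X \ {x, y}) + 2 :=
    card_le_card_sdiff_add_card.trans (by gcongr; exact card_le_two)
  have hnon_card : ∀ c, #{a | c ∉ G a} = k := by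
    intro c
    rw [← compl_filter, card_compl, hG', hα]
    lia
  have hnon : ∀ c ∉ N, X \ {x, y} = ({a | c ∉ G a} : Finset α) := fun c hc =>
    eq_of_subset_of_card_le (sdiff_pair_subset_filter_notMem hteq hc) (by rw [hnon_card]; lia)
  have hxG : Nᶜ ⊆ G x := by
    intro c hc
    by_contra hcx
    have hmem : x ∈ X \ {x, y} := hnon c (mem_compl.mp hc) ▸ mem_filter.mpr ⟨mem_univ x, hcx⟩
    exact (mem_sdiff.mp hmem).2 (mem_insert_self x {y})
  obtain ⟨c, hc⟩ : Nᶜ.Nonempty := card_pos.mp (by lia)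
  have hcard : #(X \ {x, y}) = k := hnon c (mem_compl.mp hc) ▸ hnon_card c
  have hxX : x ∈ X := by
    by_contra hxX
    have : #X ≤ #(X \ {x, y}) + 1 := by
      rw [sdiff_insert_of_notMem hxX]
      exact card_le_card_sdiff_add_card
    lia
  have hdisj : Disjoint Nᶜ (t x) := disjoint_left.mpr fun c hc hcx =>
    mem_compl.mp hc (mem_biUnion.mpr ⟨x, hxX, hcx⟩)
  have := card_le_card (union_subset hxG ht)
  rw [card_union_of_disjoint hdisj, hG] at this
  lia

end Hall

variable {n : ℕ}

section Cells

/-- The cells `(r, c)` of the first `k` rows that satisfy `p r c`. -/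
def cells (k : ℕ) (p : ℕ → Fin n → Prop) [DecidableRel p] : Finset (ℕ × Fin n) :=
  {q ∈ range k ×ˢ univ | p q.1 q.2}

/-- The symbols that `P` carries on the cells of the first `k` rows satisfying `p`. -/
def symbols (P : ℕ → Fin n → Fin n) (k : ℕ) (p : ℕ → Fin n → Prop) [DecidableRel p] :
    Finset (Fin n) :=
  (cells k p).image (uncurry P)

/-- The `t`-th staircase in the top-left corner. Its part in the first `t` rows has exactly `n`
cells, all of them inside the `t × ⌈n/t⌉` rectangle. -/
abbrev InCorner (t r : ℕ) (c : Fin n) : Prop := r + t * c < n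

/-- The cells that leave the staircase between the times `t` and `t + 1`. -/
abbrev OnFringe (t r : ℕ) (c : Fin n) : Prop := InCorner t r c ∧ ¬ InCorner (t + 1) r c

/-- The columns in which row `i` meets the staircase `InCorner (i + 1)`. -/
def newColumns (n i : ℕ) : Finset (Fin n) := {c | InCorner (i + 1) i c}

/-- The symbols that the first `i` rows of `P` do not carry on the staircase `InCorner (i + 1)`,
and which row `i` therefore has to supply. -/
def missing (P : ℕ → Fin n → Fin n) (i : ℕ) : Finset (Fin n) := (symbols P i (InCorner (i + 1)))ᶜ

/-- The array read from right to left. -/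
def mirror (P : ℕ → Fin n → Fin n) : ℕ → Fin n → Fin n := fun r c => P r c.rev

variable {P : ℕ → Fin n → Fin n} {k : ℕ} {p : ℕ → Fin n → Prop} [DecidableRel p]

theorem mem_cells {q : ℕ × Fin n} : q ∈ cells k p ↔ q.1 < k ∧ p q.1 q.2 := by
  simp only [cells, mem_filter, mem_product, mem_range, mem_univ, and_true]

theorem mem_symbols {x : Fin n} : x ∈ symbols P k p ↔ ∃ r < k, ∃ c, p r c ∧ P r c = x := by
  simp only [symbols, mem_image, mem_cells, Prod.exists, uncurry, and_assoc, exists_and_left]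

theorem mem_newColumns {i : ℕ} {c : Fin n} : c ∈ newColumns n i ↔ InCorner (i + 1) i c := by
  simp only [newColumns, mem_filter, mem_univ, true_and]

theorem mem_newColumns_iff_lt {i : ℕ} {c : Fin n} :
    c ∈ newColumns n i ↔ (c : ℕ) < n / (i + 1) := by
  rw [mem_newColumns, Nat.lt_iff_add_one_le, Nat.le_div_iff_mul_le i.succ_pos, InCorner]
  lia

theorem card_cells_succ : #(cells (k + 1) p) = #(cells k p) + #{c | p k c} := by
  simp only [cells, card_filter, sum_product, sum_range_succ]

theorem symbols_update (σ : Fin n → Fin n) :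
    symbols (update P k σ) (k + 1) p = symbols P k p ∪ ({c | p k c} : Finset (Fin n)).image σ := by
  ext x
  simp only [mem_symbols, Nat.lt_succ_iff_lt_or_eq, mem_union, mem_image, mem_filter, mem_univ,
    true_and, or_and_right, exists_or, exists_eq_left, update_self]
  exact or_congr_left (exists_congr fun r => and_congr_right fun hr => by
    rw [update_of_ne hr.ne])

theorem mirror_update (P : ℕ → Fin n → Fin n) (k : ℕ) (σ : Fin n → Fin n) :
    mirror (update P k σ) = update (mirror P) k (σ ∘ Fin.rev) := by
  funext r c
  by_cases h : r = k
  · subst h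
    simp only [mirror, update_self, comp_apply]
  · simp only [mirror, update_of_ne h]

theorem InCorner.mono {s t r : ℕ} {c : Fin n} (h : InCorner t r c) (hst : s ≤ t) :
    InCorner s r c :=
  (Nat.add_le_add_left (Nat.mul_le_mul_right _ hst) r).trans_lt h

theorem OnFringe.unique {s t r : ℕ} {c : Fin n} (hs : OnFringe s r c) (ht : OnFringe t r c) :
    s = t :=
  le_antisymm (not_lt.mp fun h => ht.2 (hs.1.mono h)) (not_lt.mp fun h => hs.2 (ht.1.mono h))

theorem symbols_inCorner (P : ℕ → Fin n → Fin n) (k t : ℕ) :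
    symbols P k (InCorner t) = symbols P k (InCorner (t + 1)) ∪ symbols P k (OnFringe t) := by
  ext x
  simp only [mem_union, mem_symbols, ← exists_or, ← and_or_left, ← or_and_right]
  refine exists_congr fun r => and_congr_right fun _ => exists_congr fun c =>
    and_congr_left fun _ => ⟨fun h => ?_, ?_⟩
  · by_cases h' : InCorner (t + 1) r c
    exacts [Or.inl h', Or.inr ⟨h, h'⟩]
  · rintro (h | h)
    exacts [h.mono t.le_succ, h.1]

theorem injOn_add_mul (t : ℕ) :
    Set.InjOn (fun q : ℕ × Fin n => q.1 + t * q.2) {q | q.1 < t} := by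
  rintro ⟨r, c⟩ hr ⟨r', c'⟩ hr' h
  simp only [Set.mem_ofPred_eq] at hr hr' h
  have hrr' : r = r' := by
    simpa only [Nat.add_mul_mod_self_left, Nat.mod_eq_of_lt, hr, hr'] using congrArg (· % t) h
  subst hrr'
  have hcc' : (c : ℕ) = c' := Nat.eq_of_mul_eq_mul_left (by lia) (Nat.add_left_cancel h)
  rw [Fin.ext hcc']

theorem card_cells_inCorner {t : ℕ} (ht : 0 < t) :
    #(cells t (InCorner t) : Finset (ℕ × Fin n)) = n := by
  rw [← card_image_of_injOn ((injOn_add_mul (n := n) t).mono fun q hq => (mem_cells.mp hq).1)]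
  suffices (cells t (InCorner t)).image (fun q : ℕ × Fin n => q.1 + t * q.2) = range n by
    rw [this, card_range]
  ext v
  simp only [mem_image, mem_cells, mem_range, Prod.exists]
  constructor
  · rintro ⟨r, c, ⟨-, h⟩, rfl⟩
    exact h
  · intro hv
    refine ⟨v % t, ⟨v / t, (Nat.div_le_self v t).trans_lt hv⟩, ⟨Nat.mod_lt v ht, ?_⟩,
      Nat.mod_add_div v t⟩
    exact (Nat.mod_add_div v t).trans_lt hv

theorem card_newColumns (n i : ℕ) : #(newColumns n i) = n / (i + 1) := by
  have heq : newColumns n i = ({c | (c : ℕ) < n / (i + 1)} : Finset (Fin n)) := by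
    ext c
    rw [mem_newColumns_iff_lt, mem_filter_univ]
  rw [heq, Fin.card_filter_val_lt, min_eq_right (Nat.div_le_self n _)]

theorem card_cells_onFringe_le {i t : ℕ} (hit : i < t) :
    #(cells (i + 1) (OnFringe t) : Finset (ℕ × Fin n)) ≤ n / (i + 1) := by
  rw [← card_range (n / (i + 1))]
  refine card_le_card_of_injOn (fun q => n - 1 - (q.1 + t * q.2)) (fun q hq => ?_)
    fun q hq q' hq' h => injOn_add_mul t ?_ ?_ ?_
  · obtain ⟨-, hin, hout⟩ := mem_cells.mp hq
    simp only [InCorner, add_one_mul] at hin hout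
    have hgap : n - 1 - (q.1 + t * q.2) + 1 ≤ q.2 := by omega
    rw [mem_coe, mem_range, Nat.lt_iff_add_one_le, Nat.le_div_iff_mul_le i.succ_pos]
    exact (Nat.mul_le_mul hgap hit).trans (by rw [mul_comm]; omega)
  · exact (mem_cells.mp hq).1.trans_le hit
  · exact (mem_cells.mp hq').1.trans_le hit
  · have hin := (mem_cells.mp hq).2.1
    have hin' := (mem_cells.mp hq').2.1
    simp only [InCorner] at hin hin' h ⊢
    omega

theorem card_missing {i : ℕ} (hP : Set.InjOn (uncurry P) ↑(cells i (InCorner (n := n) (i + 1)))) :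
    #(missing P i) = n / (i + 1) := by
  have h : n = #(cells i (InCorner (n := n) (i + 1))) + #(newColumns n i) :=
    (card_cells_inCorner i.succ_pos).symm.trans card_cells_succ
  rw [missing, card_compl, symbols, card_image_of_injOn hP, Fintype.card_fin,
    ← card_newColumns]
  lia

end Cells

section Rows

/-- The first `k` rows of `P` form a latin rectangle. -/
structure IsLatinRect (P : ℕ → Fin n → Fin n) (k : ℕ) : Prop where
  row_injective : ∀ r < k, Injective (P r)
  col_injOn : ∀ c, Set.InjOn (fun r => P r c) (Set.Iio k)

/-- The `j × ⌈n/j⌉` rectangle in the top-left corner of `P` contains every symbol; the condition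
`c * j < n` on the zero-based column `c` says `c < ⌈n/j⌉`. -/
def Covers (P : ℕ → Fin n → Fin n) (j : ℕ) : Prop :=
  ∀ x, ∃ r < j, ∃ c : Fin n, (c : ℕ) * j < n ∧ P r c = x

/-- The corner rectangles with at most `i` rows contain all symbols, and the staircase
`InCorner (i + 1)` does not repeat a symbol, so that row `i` can complete it. -/
structure IsPacked (P : ℕ → Fin n → Fin n) (i : ℕ) : Prop where
  injOn : Set.InjOn (uncurry P) ↑(cells i (InCorner (n := n) (i + 1)))
  covers : ∀ j, 0 < j → j ≤ i → Covers P j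

/-- The invariant of the row-by-row construction: in addition to what is required of the first `i`
rows, the two corners compete neither for the symbols of the next row nor, through the fringes,
for those of any later row. -/
structure IsExtendable (P : ℕ → Fin n → Fin n) (i : ℕ) : Prop where
  isLatinRect : IsLatinRect P i
  left : IsPacked P i
  right : IsPacked (mirror P) i
  disjoint_missing : Disjoint (missing P i) (missing (mirror P) i)
  disjoint_fringe : ∀ t > i,
    Disjoint (symbols P i (OnFringe t)) (symbols (mirror P) i (OnFringe t))

/-- The row `σ` completes the staircase of `P` without putting on a fringe a symbol that `Q`, the
mirror image of `P`, has on the fringe of the same time. -/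
structure Fits (P Q : ℕ → Fin n → Fin n) (i : ℕ) (σ : Fin n → Fin n) : Prop where
  bijOn : Set.BijOn σ (newColumns n i) (missing P i)
  disjoint : ∀ t > i,
    Disjoint (({c | OnFringe t i c} : Finset (Fin n)).image σ) (symbols Q i (OnFringe t))

variable {P Q : ℕ → Fin n → Fin n} {i k : ℕ} {σ : Fin n → Fin n}

theorem IsLatinRect.update (hP : IsLatinRect P k) (hσ : Injective σ)
    (hnew : ∀ r < k, ∀ c, P r c ≠ σ c) : IsLatinRect (update P k σ) (k + 1) where
  row_injective r hr := by
    rcases Nat.lt_succ_iff_lt_or_eq.mp hr with hr | rfl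
    · rw [update_of_ne hr.ne]
      exact hP.row_injective r hr
    · rwa [update_self]
  col_injOn c r hr r' hr' h := by
    simp only at h
    rcases Nat.lt_succ_iff_lt_or_eq.mp hr with hr | rfl <;>
      rcases Nat.lt_succ_iff_lt_or_eq.mp hr' with hr' | rfl
    · rw [update_of_ne hr.ne, update_of_ne hr'.ne] at h
      exact hP.col_injOn c hr hr' h
    · rw [update_of_ne hr.ne, update_self] at h
      exact absurd h (hnew r hr c)
    · rw [update_of_ne hr'.ne, update_self] at h
      exact absurd h.symm (hnew r' hr' c)
    · rfl

theorem Covers.congr {j : ℕ} (hP : Covers P j) (h : ∀ r < j, P r = Q r) : Covers Q j := by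
  intro x
  obtain ⟨r, hr, c, hc, hx⟩ := hP x
  exact ⟨r, hr, c, hc, h r hr ▸ hx⟩

theorem Covers.update {j : ℕ} (hP : Covers P j) (hjk : j ≤ k) : Covers (update P k σ) j :=
  hP.congr fun _ hr => (update_of_ne (hr.trans_le hjk).ne σ P).symm

theorem covers_update_succ (h : ∀ x ∈ missing P k, ∃ c : Fin n, (c : ℕ) * (k + 1) < n ∧ σ c = x) :
    Covers (update P k σ) (k + 1) := by
  intro x
  by_cases hx : x ∈ missing P k
  · obtain ⟨c, hc, hcx⟩ := h x hx
    exact ⟨k, k.lt_succ_self, c, hc, by rwa [update_self]⟩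
  · obtain ⟨r, hr, c, hc, hcx⟩ := mem_symbols.mp (not_not.mp (mt mem_compl.mpr hx))
    simp only [InCorner] at hc
    exact ⟨r, by lia, c, by lia, by rwa [update_of_ne hr.ne]⟩

theorem symbols_update_eq_univ (hσ : Set.BijOn σ (newColumns n k) (missing P k)) :
    symbols (update P k σ) (k + 1) (InCorner (k + 1)) = univ := by
  have himage : (newColumns n k).image σ = missing P k :=
    coe_injective (by rw [coe_image, hσ.image_eq])
  rw [newColumns] at himage
  rw [symbols_update, himage, missing, union_compl]

theorem IsPacked.update (hP : IsPacked P i) (hσ : Set.BijOn σ (newColumns n i) (missing P i)) :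
    IsPacked (update P i σ) (i + 1) where
  injOn := by
    have hinj := card_image_iff.mp (show #(symbols (Function.update P i σ) (i + 1) _) = _ by
      rw [symbols_update_eq_univ hσ, card_univ, Fintype.card_fin,
        card_cells_inCorner i.succ_pos])
    refine hinj.mono fun q hq => ?_
    obtain ⟨hr, hc⟩ := mem_cells.mp hq
    exact mem_cells.mpr ⟨hr, hc.mono (i + 1).le_succ⟩
  covers j hj hji := by
    rcases hji.lt_or_eq with h | rfl
    · exact (hP.covers j hj (Nat.lt_succ_iff.mp h)).update (Nat.lt_succ_iff.mp h)
    · refine covers_update_succ fun x hx => ?_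
      obtain ⟨c, hc, hcx⟩ := hσ.surjOn hx
      have := mem_newColumns.mp hc
      simp only [InCorner] at this
      exact ⟨c, by lia, hcx⟩

theorem missing_update_subset (hσ : Set.BijOn σ (newColumns n i) (missing P i)) :
    missing (update P i σ) (i + 1) ⊆ symbols (update P i σ) (i + 1) (OnFringe (i + 1)) := by
  intro x hx
  have hx' : x ∈ symbols (update P i σ) (i + 1) (InCorner (i + 1)) :=
    symbols_update_eq_univ hσ ▸ mem_univ x
  rw [symbols_inCorner] at hx'
  exact (mem_union.mp hx').resolve_left (mem_compl.mp hx)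

theorem Fits.image_fringe_subset (hσ : Fits P Q i σ) {t : ℕ} (ht : i < t) :
    ({c | OnFringe t i c} : Finset (Fin n)).image σ ⊆ missing P i :=
  image_subset_iff.mpr fun _ hc =>
    hσ.bijOn.mapsTo (mem_newColumns.mpr ((mem_filter.mp hc).2.1.mono ht))

theorem IsExtendable.update (hP : IsExtendable P i) (hσ : Injective σ)
    (hnew : ∀ r < i, ∀ c, P r c ≠ σ c) (hleft : Fits P (mirror P) i σ)
    (hright : Fits (mirror P) P i (σ ∘ Fin.rev)) : IsExtendable (update P i σ) (i + 1) := by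
  have hfringe : ∀ t > i, Disjoint (symbols (Function.update P i σ) (i + 1) (OnFringe t))
      (symbols (mirror (Function.update P i σ)) (i + 1) (OnFringe t)) := by
    intro t ht
    rw [mirror_update, symbols_update, symbols_update]
    refine disjoint_union_left.mpr ⟨disjoint_union_right.mpr ⟨hP.disjoint_fringe t ht, ?_⟩,
      disjoint_union_right.mpr ⟨hleft.disjoint t ht, ?_⟩⟩
    · exact (hright.disjoint t ht).symm
    · exact hP.disjoint_missing.mono (hleft.image_fringe_subset ht)
        (hright.image_fringe_subset ht)
  refine ⟨hP.isLatinRect.update hσ hnew, hP.left.update hleft.bijOn, ?_, ?_,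
    fun t ht => hfringe t (i.lt_succ_self.trans ht)⟩
  · rw [mirror_update]
    exact hP.right.update hright.bijOn
  · refine (hfringe (i + 1) i.lt_succ_self).mono (missing_update_subset hleft.bijOn) ?_
    rw [mirror_update]
    exact missing_update_subset hright.bijOn

end Rows

section CornerColumns

variable {P Q : ℕ → Fin n → Fin n} {i : ℕ}

theorem symbols_onFringe_unique (hQ : Set.InjOn (uncurry Q) ↑(cells i (InCorner (n := n) (i + 1))))
    {s t : ℕ} (hs : i < s) (ht : i < t) {x : Fin n} (hxs : x ∈ symbols Q i (OnFringe s))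
    (hxt : x ∈ symbols Q i (OnFringe t)) : s = t := by
  obtain ⟨q, hq, rfl⟩ := mem_image.mp hxs
  obtain ⟨q', hq', heq⟩ := mem_image.mp hxt
  rw [mem_cells] at hq hq'
  obtain rfl := hQ (mem_cells.mpr ⟨hq'.1, hq'.2.1.mono ht⟩) (mem_cells.mpr ⟨hq.1, hq.2.1.mono hs⟩)
    heq
  exact hq.2.unique hq'.2

theorem exists_fits [NeZero n] (hP : Set.InjOn (uncurry P) ↑(cells i (InCorner (n := n) (i + 1))))
    (hQ : Set.InjOn (uncurry Q) ↑(cells i (InCorner (n := n) (i + 1)))) :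
    ∃ σ, Fits P Q i σ := by
  classical
  have hcard : #(newColumns n i) = #(missing P i) := by rw [card_newColumns, card_missing hP]
  obtain ⟨σ, hinj, hσ⟩ := exists_injOn_of_card_conflicts_le hcard.le
      (fun c x => ∃ t > i, OnFringe t i c ∧ x ∈ symbols Q i (OnFringe t)) (by
    rintro c - x - ⟨t, hit, hc, hx⟩
    have hsymbols : #{y ∈ missing P i | ∃ t > i, OnFringe t i c ∧ y ∈ symbols Q i (OnFringe t)} ≤
        #(cells i (OnFringe t) : Finset (ℕ × Fin n)) := by
      refine (card_le_card fun y hy => ?_).trans (card_image_le (f := uncurry Q))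
      obtain ⟨-, s, -, hcs, hy⟩ := mem_filter.mp hy
      exact hcs.unique hc ▸ hy
    have hcolumns : #{d ∈ newColumns n i | ∃ t > i, OnFringe t i d ∧ x ∈ symbols Q i (OnFringe t)} ≤
        #{d : Fin n | OnFringe t i d} := by
      refine card_le_card fun d hd => mem_filter.mpr ⟨mem_univ d, ?_⟩
      obtain ⟨-, s, his, hds, hxs⟩ := mem_filter.mp hd
      exact symbols_onFringe_unique hQ his hit hxs hx ▸ hds
    calc
      _ ≤ #(cells i (OnFringe t) : Finset (ℕ × Fin n)) + #{d : Fin n | OnFringe t i d} :=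
        add_le_add hsymbols hcolumns
      _ = #(cells (i + 1) (OnFringe t) : Finset (ℕ × Fin n)) := card_cells_succ.symm
      _ ≤ n / (i + 1) := card_cells_onFringe_le hit
      _ = #(missing P i) := (card_missing hP).symm)
  have hmaps : Set.MapsTo σ (newColumns n i) (missing P i) := fun c hc => (hσ c hc).1
  refine ⟨σ, ⟨hmaps, hinj, surjOn_of_injOn_of_card_le σ hmaps hinj hcard.ge⟩, fun t ht => ?_⟩
  refine disjoint_left.mpr fun x hx hxQ => ?_
  obtain ⟨c, hc, rfl⟩ := mem_image.mp hx
  have hc := (mem_filter.mp hc).2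
  exact (hσ c (mem_newColumns.mpr (hc.1.mono ht))).2 ⟨t, ht, hc, hxQ⟩

theorem Fits.congr {σ τ : Fin n → Fin n} (hσ : Fits P Q i σ)
    (h : Set.EqOn σ τ (newColumns n i)) : Fits P Q i τ where
  bijOn := hσ.bijOn.congr h
  disjoint t ht := by
    have himage : ({c | OnFringe t i c} : Finset (Fin n)).image τ =
        ({c | OnFringe t i c} : Finset (Fin n)).image σ :=
      image_congr fun c hc => (h (mem_newColumns.mpr ((mem_filter.mp hc).2.1.mono ht))).symm
    rw [himage]
    exact hσ.disjoint t ht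

end CornerColumns

section FreeColumns

/-- The columns whose entry in row `i` neither corner prescribes. -/
def freeColumns (n i : ℕ) : Finset (Fin n) := (newColumns n i ∪ (newColumns n i).image Fin.rev)ᶜ

/-- The symbols that neither corner needs in row `i`. -/
def freeSymbols (P : ℕ → Fin n → Fin n) (i : ℕ) : Finset (Fin n) :=
  (missing P i ∪ missing (mirror P) i)ᶜ

variable {P : ℕ → Fin n → Fin n} {i : ℕ}

theorem mem_image_rev {s : Finset (Fin n)} {c : Fin n} : c ∈ s.image Fin.rev ↔ c.rev ∈ s := by
  rw [mem_image]
  exact ⟨fun ⟨d, hd, hdc⟩ => by rwa [← hdc, Fin.rev_rev], fun h => ⟨c.rev, h, Fin.rev_rev c⟩⟩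

theorem mem_freeColumns {c : Fin n} :
    c ∈ freeColumns n i ↔ c ∉ newColumns n i ∧ c.rev ∉ newColumns n i := by
  rw [freeColumns, mem_compl, mem_union, not_or, mem_image_rev]

theorem disjoint_newColumns_rev (hi : 0 < i) :
    Disjoint (newColumns n i) ((newColumns n i).image Fin.rev) := by
  have hdiv : n / (i + 1) ≤ n / 2 := Nat.div_le_div_left (by lia) two_pos
  refine disjoint_left.mpr fun c hc hc' => ?_
  rw [mem_image_rev] at hc'
  rw [mem_newColumns_iff_lt] at hc hc'
  rw [Fin.val_rev] at hc'
  lia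

theorem card_freeColumns (hi : 0 < i) : #(freeColumns n i) = n - 2 * (n / (i + 1)) := by
  rw [freeColumns, card_compl, card_union_of_disjoint (disjoint_newColumns_rev hi),
    card_image_of_injective _ Fin.rev_injective, card_newColumns, Fintype.card_fin, two_mul]

theorem IsExtendable.card_freeSymbols (hP : IsExtendable P i) :
    #(freeSymbols P i) = n - 2 * (n / (i + 1)) := by
  rw [freeSymbols, card_compl, card_union_of_disjoint hP.disjoint_missing,
    card_missing hP.left.injOn, card_missing hP.right.injOn, Fintype.card_fin, two_mul]

theorem card_columns_le_card_rows (hP : ∀ r < i, Injective (P r)) (F : Finset (Fin n))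
    (x : Fin n) :
    #{c ∈ F | ∃ r < i, P r c = x} ≤ #{r ∈ range i | ∃ c ∈ F, P r c = x} := by
  refine card_le_card_of_forall_subsingleton (fun c r => P r c = x) (fun c hc => ?_)
    fun r hr c hc d hd => hP r (mem_range.mp (mem_filter.mp hr).1) (hc.2.trans hd.2.symm)
  obtain ⟨hcF, r, hr, hx⟩ := mem_filter.mp hc
  exact ⟨r, mem_filter.mpr ⟨mem_range.mpr hr, c, hcF, hx⟩, hx⟩

theorem card_symbols_column_le (P : ℕ → Fin n → Fin n) (i : ℕ) (T : Finset (Fin n)) (c : Fin n) :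
    #{x ∈ T | ∃ r < i, P r c = x} ≤ i := by
  refine (card_le_card (t := (range i).image (P · c)) fun x hx => ?_).trans
    (card_image_le.trans_eq (card_range i))
  obtain ⟨-, r, hr, hx⟩ := mem_filter.mp hx
  exact mem_image.mpr ⟨r, mem_range.mpr hr, hx⟩

theorem two_mul_add_two_mul_div_le (hn : 10 ≤ n) (hi : 2 ≤ i) (h : 2 * i + 4 ≤ n) :
    2 * i + 2 * (n / (i + 1)) ≤ n := by
  have hdiv : (i + 1) * (n / (i + 1)) ≤ n := Nat.mul_div_le n (i + 1)
  generalize n / (i + 1) = m at hdiv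
  obtain hm | hm := le_or_gt m 2
  · lia
  · obtain rfl | hi := hi.eq_or_lt
    · lia
    · have : 0 ≤ ((m : ℤ) - 3) * (i - 3) := mul_nonneg (by lia) (by lia)
      zify at *
      nlinarith

end FreeColumns

section Fill

variable {P : ℕ → Fin n → Fin n} {i : ℕ}

theorem exists_of_notMem_missing {x : Fin n} (hx : x ∉ missing P i) :
    ∃ r < i, ∃ c, InCorner (i + 1) r c ∧ P r c = x :=
  mem_symbols.mp (not_not.mp (mt mem_compl.mpr hx))

theorem notMem_rows_of_notMem_columns (hP : ∀ r < i, Injective (P r)) {F : Finset (Fin n)}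
    {x : Fin n} {r : ℕ} (hr : r < i) {c : Fin n} (hc : c ∉ F) (hx : P r c = x) :
    r ∉ ({r ∈ range i | ∃ c ∈ F, P r c = x} : Finset ℕ) := by
  intro hmem
  obtain ⟨-, d, hd, hdx⟩ := mem_filter.mp hmem
  exact hc (hP r hr (hx.trans hdx.symm) ▸ hd)

theorem lt_two_or_eq_two_of_lt {r c : ℕ} (hn : n < 2 * i + 4) (hc : r + (i + 1) * c < n) :
    c < 2 ∨ n = 2 * i + 3 ∧ r = 0 ∧ c = 2 := by
  obtain hc2 | rfl | hc2 := lt_trichotomy c 2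
  · exact Or.inl hc2
  · lia
  · have := Nat.mul_le_mul_left (i + 1) (Nat.succ_le_of_lt hc2)
    lia

/-- A free symbol already lies in both corners, so that not all of its `i` previous occurrences are
in free columns. -/
theorem IsExtendable.card_rows_add_four_le (hP : IsExtendable P i) (hn : 10 ≤ n)
    (h : 2 * i + 2 ≤ n) (hlt : n < 2 * i + 4) {x : Fin n} (hx : x ∈ freeSymbols P i) :
    #{r ∈ range i | ∃ c ∈ freeColumns n i, P r c = x} + i + 4 ≤ n := by
  set R : Finset ℕ := {r ∈ range i | ∃ c ∈ freeColumns n i, P r c = x}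
  have hrow := hP.isLatinRect.row_injective
  have hdiv : n / (i + 1) = 2 := Nat.div_eq_of_lt_le (by lia) (by lia)
  rw [freeSymbols, mem_compl, mem_union, not_or] at hx
  obtain ⟨r, hr, c, hc, hrc⟩ := exists_of_notMem_missing hx.1
  obtain ⟨s, hs, d, hd, hsd⟩ := exists_of_notMem_missing hx.2
  have hleft : c ∈ newColumns n i → r ∉ R := fun hc =>
    notMem_rows_of_notMem_columns hrow hr (notMem_compl.mpr (mem_union_left _ hc)) hrc
  have hright : d ∈ newColumns n i → s ∉ R := fun hd =>
    notMem_rows_of_notMem_columns hrow hs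
      (notMem_compl.mpr (mem_union_right _ (mem_image_of_mem _ hd))) hsd
  rw [mem_newColumns_iff_lt, hdiv] at hleft hright
  simp only [InCorner] at hc hd
  have hcd : r = s → (c : ℕ) + d + 1 = n := by
    rintro rfl
    have := congrArg Fin.val (hrow r hr (hrc.trans hsd.symm))
    rw [Fin.val_rev] at this
    lia
  have hcard : ∀ S ⊆ range i, Disjoint R S → #R + #S ≤ i := fun S hS hRS => by
    rw [← card_union_of_disjoint hRS]
    exact (card_le_card (union_subset (filter_subset _ _) hS)).trans_eq (card_range i)
  rcases lt_two_or_eq_two_of_lt hlt hc with hc2 | ⟨hn3, hr0, hc2⟩ <;>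
    rcases lt_two_or_eq_two_of_lt hlt hd with hd2 | ⟨hn3, hs0, hd2⟩
  · have := hcard {r, s} (by simp [insert_subset_iff, hr, hs])
      (by simp [hleft hc2, hright hd2])
    rw [card_pair (by lia)] at this
    lia
  · have := hcard {r} (by simp [hr]) (by simp [hleft hc2])
    rw [card_singleton] at this
    lia
  · have := hcard {s} (by simp [hs]) (by simp [hright hd2])
    rw [card_singleton] at this
    lia
  · lia

theorem IsExtendable.card_rows_add_le (hP : IsExtendable P i) (hn : 10 ≤ n) (hi : 2 ≤ i)
    (h : 2 * i + 2 ≤ n) {x : Fin n} (hx : x ∈ freeSymbols P i) :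
    #{r ∈ range i | ∃ c ∈ freeColumns n i, P r c = x} + i ≤ #(freeSymbols P i) := by
  rw [hP.card_freeSymbols]
  obtain hlt | hle := lt_or_ge n (2 * i + 4)
  · have hdiv : n / (i + 1) = 2 := Nat.div_eq_of_lt_le (by lia) (by lia)
    have := hP.card_rows_add_four_le hn h hlt hx
    lia
  · have := two_mul_add_two_mul_div_le hn hi hle
    have hR : #{r ∈ range i | ∃ c ∈ freeColumns n i, P r c = x} ≤ #(range i) :=
      card_filter_le _ _
    rw [card_range] at hR
    lia

theorem IsExtendable.exists_bijOn_freeColumns (hP : IsExtendable P i) (hn : 10 ≤ n)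
    (hi : 2 ≤ i) (h : 2 * i + 2 ≤ n) :
    ∃ σ : Fin n → Fin n, Set.BijOn σ (freeColumns n i) (freeSymbols P i) ∧
      ∀ c ∈ freeColumns n i, ∀ r < i, P r c ≠ σ c := by
  have : NeZero n := ⟨by lia⟩
  have hcard : #(freeColumns n i) = #(freeSymbols P i) := by
    rw [card_freeColumns (by lia), hP.card_freeSymbols]
  obtain ⟨σ, hinj, hσ⟩ := exists_injOn_of_card_conflicts_le hcard.le (fun c x => ∃ r < i, P r c = x)
    fun c _ x hx _ => by
      have hcol := card_symbols_column_le P i (freeSymbols P i) c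
      have hsym := card_columns_le_card_rows hP.isLatinRect.row_injective (freeColumns n i) x
      have := hP.card_rows_add_le hn hi h hx
      lia
  have hmaps : Set.MapsTo σ (freeColumns n i) (freeSymbols P i) := fun c hc => (hσ c hc).1
  exact ⟨σ, ⟨hmaps, hinj, surjOn_of_injOn_of_card_le σ hmaps hinj hcard.ge⟩,
    fun c hc r hr heq => (hσ c hc).2 ⟨r, hr, heq⟩⟩

theorem ne_of_mem_missing {c x : Fin n} (hc : c ∈ newColumns n i) (hx : x ∈ missing P i) {r : ℕ}
    (hr : r < i) : P r c ≠ x := by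
  rintro rfl
  have hcorner := mem_newColumns.mp hc
  exact mem_compl.mp hx (mem_symbols.mpr
    ⟨r, hr, c, (Nat.add_le_add_right hr.le _).trans_lt hcorner, rfl⟩)

theorem IsExtendable.exists_row (hP : IsExtendable P i) (hn : 10 ≤ n) (hi : 2 ≤ i)
    (h : 2 * i + 2 ≤ n) :
    ∃ σ : Fin n → Fin n, Injective σ ∧ (∀ r < i, ∀ c, P r c ≠ σ c) ∧
      Fits P (mirror P) i σ ∧ Fits (mirror P) P i (σ ∘ Fin.rev) := by
  have : NeZero n := ⟨by lia⟩
  obtain ⟨f, hf⟩ := exists_fits hP.left.injOn hP.right.injOn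
  obtain ⟨g, hg⟩ := exists_fits hP.right.injOn hP.left.injOn
  obtain ⟨τ, hτ, hτnew⟩ := hP.exists_bijOn_freeColumns hn hi h
  let σ : Fin n → Fin n := fun c =>
    if c ∈ newColumns n i then f c else if c.rev ∈ newColumns n i then g c.rev else τ c
  have hσf : Set.EqOn f σ (newColumns n i) := fun c hc => (if_pos hc).symm
  have hσg : Set.EqOn g (σ ∘ Fin.rev) (newColumns n i) := fun c hc => by
    have hc' : c.rev ∉ newColumns n i := fun hrev =>
      disjoint_left.mp (disjoint_newColumns_rev (by lia)) hrev (mem_image_of_mem _ hc)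
    simp only [σ, comp_apply, if_neg hc', Fin.rev_rev]
    exact (if_pos hc).symm
  have hστ : Set.EqOn τ σ (freeColumns n i) := fun c hc => by
    obtain ⟨hc, hc'⟩ := mem_freeColumns.mp hc
    simp only [σ, if_neg hc, if_neg hc']
  have hleft := hf.congr hσf
  have hright := hg.congr hσg
  refine ⟨σ, Finite.injective_iff_surjective.mpr fun x => ?_, fun r hr c => ?_, hleft, hright⟩
  · by_cases hx : x ∈ missing P i
    · exact (hleft.bijOn.surjOn hx).imp fun _ => And.right
    by_cases hx' : x ∈ missing (mirror P) i
    · obtain ⟨c, -, hc⟩ := hright.bijOn.surjOn hx'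
      exact ⟨c.rev, hc⟩
    · have hfree : x ∈ freeSymbols P i := mem_compl.mpr (mt mem_union.mp (not_or.mpr ⟨hx, hx'⟩))
      exact ((hτ.congr hστ).surjOn hfree).imp fun _ => And.right
  · by_cases hc : c ∈ newColumns n i
    · exact ne_of_mem_missing hc (hleft.bijOn.mapsTo hc) hr
    by_cases hc' : c.rev ∈ newColumns n i
    · have := ne_of_mem_missing hc' (hright.bijOn.mapsTo hc') hr
      rwa [mirror, comp_apply, Fin.rev_rev] at this
    · have hfree := mem_freeColumns.mpr ⟨hc, hc'⟩
      exact hστ hfree ▸ hτnew c hfree r hr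

theorem IsExtendable.exists_succ (hP : IsExtendable P i) (hn : 10 ≤ n) (hi : 2 ≤ i)
    (h : 2 * i + 2 ≤ n) : ∃ Q : ℕ → Fin n → Fin n, IsExtendable Q (i + 1) := by
  obtain ⟨σ, hσ, hnew, hleft, hright⟩ := hP.exists_row hn hi h
  exact ⟨_, hP.update hσ hnew hleft hright⟩

end Fill

section Start

/-- The array `P` with every symbol `x` replaced by `n - 1 - x`. -/
def complement (P : ℕ → Fin n → Fin n) : ℕ → Fin n → Fin n := fun r c => (P r c).rev

/-- The cyclic shift of `{0, …, m - 1}` by `⌊n/4⌋`. -/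
def shift (n m c : ℕ) : ℕ := if c + n / 4 < m then c + n / 4 else c + n / 4 - m

/-- The first two rows of the construction: the identity, and below it the two halves of the
symbols interchanged, each of them shifted by about a quarter of the order. -/
def start (n : ℕ) : ℕ → Fin n → Fin n
  | 0, c => c
  | _ + 1, c =>
    ⟨if (c : ℕ) < n - n / 2 then n - 1 - shift n (n - n / 2) c else shift n (n / 2) c.rev, by
      have := c.2
      unfold shift
      split_ifs <;> lia⟩

/-- The form in which the top-left corner sees the rows of `start n`. After complementation the
top-right corner sees them in the same form, with the other half of `n` for `m`. -/
structure IsStart (P : ℕ → Fin n → Fin n) (m : ℕ) : Prop where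
  half_le : n ≤ 2 * m + 1
  le_half : 2 * m ≤ n + 1
  row_zero : ∀ c, P 0 c = c
  row_one : ∀ c : Fin n, (c : ℕ) < m → (P 1 c : ℕ) + shift n m c + 1 = n

variable {P : ℕ → Fin n → Fin n} {i m : ℕ}

theorem mem_symbols_complement {k : ℕ} {p : ℕ → Fin n → Prop} [DecidableRel p] {x : Fin n} :
    x ∈ symbols (complement P) k p ↔ x.rev ∈ symbols P k p := by
  simp only [mem_symbols, complement, Fin.rev_eq_iff]

theorem mem_missing_complement {x : Fin n} :
    x ∈ missing (complement P) i ↔ x.rev ∈ missing P i := by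
  rw [missing, missing, mem_compl, mem_compl, mem_symbols_complement]

theorem IsPacked.complement (hP : IsPacked P i) : IsPacked (complement P) i where
  injOn := Fin.rev_injective.comp_injOn hP.injOn
  covers j hj hji x := by
    obtain ⟨r, hr, c, hc, hx⟩ := hP.covers j hj hji x.rev
    exact ⟨r, hr, c, hc, Fin.rev_eq_iff.mpr hx⟩

theorem complement_complement (P : ℕ → Fin n → Fin n) :
    LRPA.complement (LRPA.complement P) = P := by
  funext r c
  exact Fin.rev_rev _

theorem isStart_start (n : ℕ) : IsStart (start n) (n - n / 2) where
  half_le := by lia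
  le_half := by lia
  row_zero _ := rfl
  row_one c hc := by
    simp only [start, if_pos hc, shift]
    split_ifs <;> lia

theorem isStart_complement_mirror_start (n : ℕ) :
    IsStart (complement (mirror (start n))) (n / 2) where
  half_le := by lia
  le_half := by lia
  row_zero c := Fin.rev_rev c
  row_one c hc := by
    simp only [complement, mirror, start, Fin.rev_rev, Fin.val_rev, shift]
    split_ifs <;> lia

theorem isLatinRect_start (hn : 10 ≤ n) : IsLatinRect (start n) 2 where
  row_injective r hr := by
    interval_cases r
    · exact injective_id
    · intro c c' h
      have h := congrArg Fin.val h
      simp only [start, shift, Fin.val_rev] at h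
      ext
      split_ifs at h <;> lia
  col_injOn c := by
    have hne : start n 0 c ≠ start n 1 c := fun h => by
      have h := congrArg Fin.val h
      simp only [start, shift, Fin.val_rev] at h
      split_ifs at h <;> lia
    intro r hr s hs h
    simp only [Set.mem_Iio] at hr hs
    interval_cases r <;> interval_cases s
    exacts [rfl, absurd h hne, absurd h.symm hne, rfl]

theorem IsStart.injOn (hP : IsStart P m) (hn : 10 ≤ n) :
    Set.InjOn (uncurry P) ↑(cells 2 (InCorner (n := n) 3)) := by
  have hm := hP.half_le
  have hm' := hP.le_half
  rintro ⟨r, c⟩ hq ⟨s, d⟩ hq' h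
  obtain ⟨hr, hc⟩ := mem_cells.mp hq
  obtain ⟨hs, hd⟩ := mem_cells.mp hq'
  simp only [uncurry, InCorner] at hr hc hs hd h
  have h := congrArg Fin.val h
  have hcm := hP.row_one c (by lia)
  have hdm := hP.row_one d (by lia)
  have hc0 := congrArg Fin.val (hP.row_zero c)
  have hd0 := congrArg Fin.val (hP.row_zero d)
  simp only [shift] at hcm hdm
  rw [Prod.mk.injEq, Fin.ext_iff]
  interval_cases r <;> interval_cases s <;> split_ifs at hcm hdm <;> omega

theorem IsStart.isPacked (hP : IsStart P m) (hn : 10 ≤ n) : IsPacked P 2 where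
  injOn := hP.injOn hn
  covers j hj hj2 x := by
    have hm := hP.half_le
    have hm' := hP.le_half
    by_cases hx : (x : ℕ) * j < n
    · exact ⟨0, hj, x, hx, hP.row_zero x⟩
    obtain rfl : j = 2 := by
      interval_cases j
      · lia
      · rfl
    obtain ⟨c, hc, hcx⟩ : ∃ c < m, shift n m c + x + 1 = n := by
      refine ⟨if n / 4 ≤ x.rev then x.rev - n / 4 else x.rev + m - n / 4, ?_, ?_⟩ <;>
      · simp only [shift, Fin.val_rev]
        split_ifs <;> lia
    have hrow := hP.row_one ⟨c, by lia⟩ hc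
    refine ⟨1, one_lt_two, ⟨c, by lia⟩, ?_, ?_⟩
    · simp only
      lia
    · ext
      lia

theorem IsStart.of_mem_missing (hP : IsStart P m) (hn : 10 ≤ n) {x : Fin n}
    (hx : x ∈ missing P 2) : n ≤ 3 * (x : ℕ) ∧ (x + m < n ∨ 2 * n < 3 * ((x : ℕ) + 1)) := by
  have hnot : ∀ r < 2, ∀ c : Fin n, r + 3 * (c : ℕ) < n → P r c ≠ x := fun r hr c hc h =>
    mem_compl.mp hx (mem_symbols.mpr ⟨r, hr, c, hc, h⟩)
  have hm := hP.half_le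
  have hm' := hP.le_half
  refine ⟨not_lt.mp fun h => hnot 0 two_pos x (by lia) (hP.row_zero x), ?_⟩
  by_contra! h
  refine hnot 1 one_lt_two ⟨n - 1 - x - n / 4, by lia⟩ (by simp only; lia) ?_
  have hrow := hP.row_one ⟨n - 1 - x - n / 4, by lia⟩ (by simp only; lia)
  simp only [shift] at hrow
  ext
  split_ifs at hrow <;> lia

theorem ne_shift_of_onFringe (hm : n ≤ 2 * m + 1) {t : ℕ} (ht : 3 ≤ t) {c d : Fin n}
    (hc : OnFringe t 0 c) (hd : OnFringe t 1 d) : (c : ℕ) ≠ shift n m d := by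
  intro h
  obtain ⟨hc, hc'⟩ := hc
  obtain ⟨hd, hd'⟩ := hd
  simp only [InCorner, add_one_mul] at hc hc' hd hd'
  have hthree : ∀ a, 3 * a ≤ t * a := fun a => Nat.mul_le_mul_right a ht
  simp only [shift] at h
  split_ifs at h with hlt
  · rw [h, mul_add] at hc
    have := hthree d
    have := hthree (n / 4)
    omega
  · have heq : (d : ℕ) = c + (m - n / 4) := by omega
    rw [heq, mul_add] at hd
    have := hthree c
    have := hthree (m - n / 4)
    omega

theorem isExtendable_start (hn : 10 ≤ n) : IsExtendable (start n) 2 := by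
  have hleft := isStart_start n
  have hright := isStart_complement_mirror_start n
  have hmirror := complement_complement (mirror (start n))
  refine ⟨isLatinRect_start hn, hleft.isPacked hn, ?_, disjoint_left.mpr fun x hx hx' => ?_, ?_⟩
  · exact hmirror ▸ (hright.isPacked hn).complement
  · rw [← hmirror, mem_missing_complement] at hx'
    have := hleft.of_mem_missing hn hx
    have := hright.of_mem_missing hn hx'
    rw [Fin.val_rev] at this
    lia
  · intro t ht
    refine disjoint_left.mpr fun x hx hx' => ?_
    rw [← hmirror, mem_symbols_complement] at hx'
    obtain ⟨r, hr, c, hc, rfl⟩ := mem_symbols.mp hx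
    obtain ⟨s, hs, d, hd, hsd⟩ := mem_symbols.mp hx'
    have hsd := congrArg Fin.val hsd
    rw [Fin.val_rev] at hsd
    have hthree : ∀ a, 3 * a ≤ t * a := fun a => Nat.mul_le_mul_right a (by lia)
    have hcn := hthree c
    have hdn := hthree d
    have hc' := hc.1
    have hd' := hd.1
    simp only [InCorner] at hc' hd'
    have hc0 := congrArg Fin.val (hleft.row_zero c)
    have hd0 := congrArg Fin.val (hright.row_zero d)
    have hc1 := hleft.row_one c (by omega)
    have hd1 := hright.row_one d (by omega)
    interval_cases r <;> interval_cases s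
    · omega
    · exact ne_shift_of_onFringe hright.half_le ht hc hd (by omega)
    · exact ne_shift_of_onFringe hleft.half_le ht hd hc (by omega)
    · simp only [shift] at hc1 hd1
      split_ifs at hc1 hd1 <;> omega

end Start

section Completion

/-- Column `c` of the first `k` rows of `P` does not contain `x`, so that a latin rectangle may
have `x` in column `c` of row `k`. -/
abbrev Admits (P : ℕ → Fin n → Fin n) (k : ℕ) (c x : Fin n) : Prop := ∀ r < k, P r c ≠ x

/-- The first `k` rows of `P` form a latin rectangle, and its top-left and top-right corner
rectangles `j × ⌈n/j⌉` contain all symbols. For `k = n` this is a latin retransmission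
permutation array. -/
structure IsPartialLRPA (P : ℕ → Fin n → Fin n) (k : ℕ) : Prop where
  isLatinRect : IsLatinRect P k
  left : ∀ j, 0 < j → j ≤ k → Covers P j
  right : ∀ j, 0 < j → j ≤ k → Covers (mirror P) j

variable {P : ℕ → Fin n → Fin n} {i k : ℕ}

theorem IsLatinRect.card_admissible_symbols (hP : IsLatinRect P k) (c : Fin n) :
    #{x | Admits P k c x} = n - k := by
  have hcompl : ({x | Admits P k c x} : Finset (Fin n)) = ((range k).image (P · c))ᶜ := by
    ext x
    simp only [mem_filter_univ, mem_compl, mem_image, mem_range, not_exists, not_and]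
  have hinj : Set.InjOn (P · c) (range k) := by
    simpa only [coe_range] using hP.col_injOn c
  rw [hcompl, card_compl, card_image_of_injOn hinj, card_range, Fintype.card_fin]

theorem IsLatinRect.card_admissible_columns (hP : IsLatinRect P k) (x : Fin n) :
    #{c | Admits P k c x} = n - k := by
  have hcol : ∀ r, ∃ c, r < k → P r c = x := fun r => by
    by_cases hr : r < k
    · obtain ⟨c, hc⟩ := Finite.surjective_of_injective (hP.row_injective r hr) x
      exact ⟨c, fun _ => hc⟩
    · exact ⟨x, fun h => absurd h hr⟩
  choose col hcol using hcol
  have hcompl : ({c | Admits P k c x} : Finset (Fin n)) = ((range k).image col)ᶜ := by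
    ext c
    simp only [mem_filter_univ, mem_compl, mem_image, mem_range, not_exists, not_and]
    exact forall₂_congr fun r hr => not_congr
      ⟨fun h => hP.row_injective r hr ((hcol r hr).trans h.symm), fun h => h ▸ hcol r hr⟩
  have hinj : Set.InjOn col (range k) := fun r hr s hs hrs => by
    rw [mem_coe, mem_range] at hr hs
    exact hP.col_injOn (col r) hr hs ((hcol r hr).trans (hrs ▸ (hcol s hs).symm))
  rw [hcompl, card_compl, card_image_of_injOn hinj, card_range, Fintype.card_fin]

theorem IsLatinRect.exists_row (hP : IsLatinRect P k) (hk : k < n) :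
    ∃ σ : Fin n → Fin n, Injective σ ∧ ∀ r < k, ∀ c, P r c ≠ σ c := by
  obtain ⟨σ, hσ, hadm⟩ := exists_injective_of_degree (m := n - k) (by lia)
    (t := fun c => {x | Admits P k c x}) (fun c => (hP.card_admissible_symbols c).ge)
    fun x => by simpa only [mem_filter_univ] using (hP.card_admissible_columns x).le
  exact ⟨σ, hσ, fun r hr c => (mem_filter.mp (hadm c)).2 r hr⟩

theorem IsLatinRect.exists_eq (hP : IsLatinRect P n) (c x : Fin n) : ∃ r < n, P r c = x := by
  by_contra! h
  have hcard := hP.card_admissible_symbols c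
  rw [Nat.sub_self, card_eq_zero] at hcard
  exact notMem_empty x (hcard ▸ mem_filter.mpr ⟨mem_univ x, h⟩)

theorem IsLatinRect.covers (hP : IsLatinRect P n) : Covers P n := fun x => by
  obtain ⟨r, hr, hx⟩ := hP.exists_eq ⟨0, x.pos⟩ x
  exact ⟨r, hr, ⟨0, x.pos⟩, by rw [zero_mul]; exact x.pos, hx⟩

theorem IsLatinRect.mirror (hP : IsLatinRect P k) : IsLatinRect (mirror P) k where
  row_injective r hr := (hP.row_injective r hr).comp Fin.rev_injective
  col_injOn c := hP.col_injOn c.rev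

theorem Covers.succ (hP : Covers P k) (hn : n ≤ 2 * k) (hk : k + 1 < n) : Covers P (k + 1) := by
  intro x
  obtain ⟨r, hr, c, hc, hx⟩ := hP x
  have hc2 : (c : ℕ) < 2 := lt_of_mul_lt_mul_right (hc.trans_le hn) k.zero_le
  exact ⟨r, by lia, c, (Nat.mul_le_mul_right (k + 1) (Nat.le_of_lt_succ hc2)).trans_lt (by lia), hx⟩

theorem IsPartialLRPA.exists_succ (hP : IsPartialLRPA P k) (hn : n ≤ 2 * k) (hk : k < n) :
    ∃ Q : ℕ → Fin n → Fin n, IsPartialLRPA Q (k + 1) := by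
  obtain ⟨σ, hσ, hnew⟩ := hP.isLatinRect.exists_row hk
  have hrect := hP.isLatinRect.update hσ hnew
  have hcovers : ∀ {Q : ℕ → Fin n → Fin n} {τ : Fin n → Fin n},
      (∀ j, 0 < j → j ≤ k → Covers Q j) → IsLatinRect (update Q k τ) (k + 1) →
      ∀ j, 0 < j → j ≤ k + 1 → Covers (update Q k τ) j := by
    intro Q τ hQ hrect j hj hjk
    rcases hjk.lt_or_eq with h | rfl
    · exact (hQ j hj (Nat.lt_succ_iff.mp h)).update (Nat.lt_succ_iff.mp h)
    rcases Nat.lt_or_eq_of_le (Nat.succ_le_of_lt hk) with h | rfl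
    · exact ((hQ k (by lia) le_rfl).update le_rfl).succ hn h
    · exact hrect.covers
  exact ⟨_, hrect, hcovers hP.left hrect,
    mirror_update P k σ ▸ hcovers hP.right (mirror_update P k σ ▸ hrect.mirror)⟩

theorem IsPartialLRPA.exists_complete (hP : IsPartialLRPA P k) (hn : n ≤ 2 * k) (hk : k ≤ n) :
    ∃ Q : ℕ → Fin n → Fin n, IsPartialLRPA Q n := by
  suffices h : ∀ m, k ≤ m → m ≤ n → ∃ Q : ℕ → Fin n → Fin n, IsPartialLRPA Q m from h n hk le_rfl
  intro m hm
  induction m, hm using Nat.le_induction with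
  | base => exact fun _ => ⟨P, hP⟩
  | succ m hm ih =>
    intro hmn
    obtain ⟨Q, hQ⟩ := ih (by lia)
    exact hQ.exists_succ (by lia) hmn

end Completion

section MiddleRow

variable {P : ℕ → Fin n → Fin n} {k : ℕ}

theorem admits_of_mem_missing (hn : n = 2 * k + 1) {x : Fin n} (hx : x ∈ missing P k) {c : Fin n}
    (hc : (c : ℕ) < 2) : Admits P k c x := by
  intro r hr hrc
  have := Nat.mul_le_mul_left (k + 1) (Nat.le_of_lt_succ hc)
  refine mem_compl.mp hx (mem_symbols.mpr ⟨r, hr, c, ?_, hrc⟩)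
  simp only [InCorner]
  lia

theorem IsLatinRect.exists_row_of_two_restricted (hP : IsLatinRect P k) (hn : n = 2 * k + 1)
    {x y : Fin n} (hxy : x ≠ y) {S T : Finset (Fin n)} (hS : 2 ≤ #S) (hT : 2 ≤ #T)
    (hSx : ∀ c ∈ S, Admits P k c x) (hTy : ∀ c ∈ T, Admits P k c y) :
    ∃ σ : Fin n → Fin n, Injective σ ∧ (∀ r < k, ∀ c, P r c ≠ σ c) ∧
      (∃ c ∈ S, σ c = x) ∧ ∃ c ∈ T, σ c = y := by
  let G : Fin n → Finset (Fin n) := fun z => {c | Admits P k c z}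
  let t : Fin n → Finset (Fin n) := Function.update (Function.update G x S) y T
  have htx : t x = S := (update_of_ne hxy _ _).trans (update_self _ _ _)
  have hty : t y = T := update_self _ _ _
  have hteq : ∀ z, z ≠ x → z ≠ y → t z = G z := fun z hzx hzy =>
    (update_of_ne hzy _ _).trans (update_of_ne hzx _ _)
  obtain ⟨f, hf, hft⟩ := exists_injective_of_regular_of_two_restricted
    ((Fintype.card_fin n).trans hn) ((Fintype.card_fin n).trans hn)
    (fun z => (hP.card_admissible_columns z).trans (by lia))
    (fun c => by
      simpa only [mem_filter_univ] using (hP.card_admissible_symbols c).trans (by lia))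
    (fun c hc => mem_filter.mpr ⟨mem_univ c, hSx c (htx ▸ hc)⟩) hteq (htx ▸ hS) (hty ▸ hT)
  obtain ⟨σ, hσf, hfσ⟩ := bijective_iff_has_inverse.mp (Finite.injective_iff_bijective.mp hf)
  refine ⟨σ, hfσ.injective, fun r hr c => ?_, ⟨f x, htx ▸ hft x, hσf x⟩, f y, hty ▸ hft y, hσf y⟩
  have hc := hft (σ c)
  rw [hfσ c] at hc
  by_cases hcx : σ c = x
  · rw [hcx, htx] at hc
    exact hcx ▸ hSx c hc r hr
  by_cases hcy : σ c = y
  · rw [hcy, hty] at hc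
    exact hcy ▸ hTy c hc r hr
  · rw [hteq _ hcx hcy] at hc
    exact (mem_filter.mp hc).2 r hr

theorem IsExtendable.exists_middle_row (hP : IsExtendable P k) (hn : n = 2 * k + 1) (hk : 0 < k) :
    ∃ σ : Fin n → Fin n, Injective σ ∧ (∀ r < k, ∀ c, P r c ≠ σ c) ∧
      (∀ x ∈ missing P k, ∃ c : Fin n, (c : ℕ) < 2 ∧ σ c = x) ∧
      ∀ x ∈ missing (mirror P) k, ∃ c : Fin n, (c : ℕ) < 2 ∧ σ c.rev = x := by
  have hdiv : n / (k + 1) = 1 := Nat.div_eq_of_lt_le (by lia) (by lia)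
  obtain ⟨x, hx⟩ := card_eq_one.mp ((card_missing hP.left.injOn).trans hdiv)
  obtain ⟨y, hy⟩ := card_eq_one.mp ((card_missing hP.right.injOn).trans hdiv)
  have hxmem : x ∈ missing P k := hx ▸ mem_singleton_self x
  have hymem : y ∈ missing (mirror P) k := hy ▸ mem_singleton_self y
  let firstTwo : Finset (Fin n) := {c | (c : ℕ) < 2}
  have htwo : #firstTwo = 2 := (Fin.card_filter_val_lt).trans (min_eq_right (by lia))
  obtain ⟨σ, hσ, hnew, ⟨c, hc, hcx⟩, d, hd, hdy⟩ := hP.isLatinRect.exists_row_of_two_restricted hn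
    (disjoint_iff_ne.mp hP.disjoint_missing x hxmem y hymem)
    htwo.ge ((card_image_of_injective _ Fin.rev_injective).trans htwo).ge
    (fun c hc => admits_of_mem_missing hn hxmem (mem_filter.mp hc).2)
    (fun c hc => by
      simpa only [mirror, Admits, Fin.rev_rev] using
        admits_of_mem_missing hn hymem (mem_filter.mp (mem_image_rev.mp hc)).2)
  refine ⟨σ, hσ, hnew, fun z hz => ?_, fun z hz => ?_⟩
  · exact ⟨c, (mem_filter.mp hc).2, hcx.trans (mem_singleton.mp (hx ▸ hz)).symm⟩
  · refine ⟨d.rev, (mem_filter.mp (mem_image_rev.mp hd)).2, ?_⟩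
    rw [Fin.rev_rev]
    exact hdy.trans (mem_singleton.mp (hy ▸ hz)).symm

theorem IsExtendable.isPartialLRPA (hP : IsExtendable P k) : IsPartialLRPA P k :=
  ⟨hP.isLatinRect, hP.left.covers, hP.right.covers⟩

theorem IsPacked.covers_update (hP : IsPacked P k) {σ : Fin n → Fin n} (hn : n = 2 * k + 1)
    (hk : 0 < k) (hσ : ∀ x ∈ missing P k, ∃ c : Fin n, (c : ℕ) < 2 ∧ σ c = x) {j : ℕ} (hj : 0 < j)
    (hjk : j ≤ k + 1) : Covers (Function.update P k σ) j := by
  rcases hjk.lt_or_eq with h | rfl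
  · exact (hP.covers j hj (Nat.lt_succ_iff.mp h)).update (Nat.lt_succ_iff.mp h)
  · refine covers_update_succ fun x hx => ?_
    obtain ⟨c, hc, hcx⟩ := hσ x hx
    have := Nat.mul_le_mul_right (k + 1) (Nat.le_of_lt_succ hc)
    exact ⟨c, by lia, hcx⟩

theorem IsExtendable.exists_isPartialLRPA_succ (hP : IsExtendable P k) (hn : n = 2 * k + 1)
    (hk : 0 < k) : ∃ Q : ℕ → Fin n → Fin n, IsPartialLRPA Q (k + 1) := by
  obtain ⟨σ, hσ, hnew, hleft, hright⟩ := hP.exists_middle_row hn hk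
  refine ⟨_, hP.isLatinRect.update hσ hnew, fun j => hP.left.covers_update hn hk hleft, ?_⟩
  rw [mirror_update]
  exact fun j => hP.right.covers_update hn hk hright

theorem exists_isExtendable (hn : 10 ≤ n) {i : ℕ} (hi : 2 ≤ i) :
    2 * i ≤ n → ∃ P : ℕ → Fin n → Fin n, IsExtendable P i := by
  induction i, hi using Nat.le_induction with
  | base => exact fun _ => ⟨_, isExtendable_start hn⟩
  | succ i hi ih =>
    intro h
    obtain ⟨P, hP⟩ := ih (by lia)
    exact hP.exists_succ hn hi h

theorem exists_isPartialLRPA_of_ten_le (hn : 10 ≤ n) :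
    ∃ P : ℕ → Fin n → Fin n, IsPartialLRPA P n := by
  obtain ⟨P, hP⟩ := exists_isExtendable hn (i := n / 2) (by lia) (by lia)
  rcases Nat.even_or_odd' n with ⟨k, hk | hk⟩
  · exact hP.isPartialLRPA.exists_complete (by lia) (by lia)
  · obtain ⟨Q, hQ⟩ := hP.exists_isPartialLRPA_succ (by lia) (by lia)
    exact hQ.exists_complete (by lia) (by lia)

end MiddleRow

section SmallOrders

variable {P : ℕ → Fin n → Fin n} {k : ℕ}

instance : Decidable (IsLatinRect P k) :=
  decidable_of_iff
    ((∀ r < k, Injective (P r)) ∧ ∀ c, ∀ r < k, ∀ s < k, P r c = P s c → r = s)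
    ⟨fun ⟨hrow, hcol⟩ => ⟨hrow, fun c r hr s hs => hcol c r hr s hs⟩,
      fun h => ⟨h.row_injective, fun c _ hr _ hs => h.col_injOn c hr hs⟩⟩

instance {j : ℕ} : Decidable (Covers P j) :=
  inferInstanceAs (Decidable (∀ x, ∃ r < j, ∃ c : Fin n, (c : ℕ) * j < n ∧ P r c = x))

instance : Decidable (IsPartialLRPA P k) :=
  decidable_of_iff (IsLatinRect P k ∧ ∀ j < k, Covers P (j + 1) ∧ Covers (mirror P) (j + 1)) <| by
    refine ⟨fun ⟨hrect, h⟩ => ⟨hrect, fun j hj hjk => ?_, fun j hj hjk => ?_⟩, fun h =>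
      ⟨h.isLatinRect, fun j hj => ⟨h.left _ j.succ_pos hj, h.right _ j.succ_pos hj⟩⟩⟩
    all_goals obtain ⟨j, rfl⟩ := Nat.exists_eq_succ_of_ne_zero hj.ne'
    exacts [(h j hjk).1, (h j hjk).2]

/-- The array with the given initial rows; entries not in the list are `0`. -/
def ofRows (n : ℕ) [NeZero n] (rows : List (List ℕ)) : ℕ → Fin n → Fin n :=
  fun r c => Fin.ofNat n ((rows.getD r []).getD c 0)

theorem exists_isPartialLRPA_of_lt_ten (hn : 0 < n) (hn' : n < 10) :
    ∃ P : ℕ → Fin n → Fin n, IsPartialLRPA P n := by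
  suffices h : ∃ k, n ≤ 2 * k ∧ k ≤ n ∧ ∃ P : ℕ → Fin n → Fin n, IsPartialLRPA P k by
    obtain ⟨k, hnk, hkn, P, hP⟩ := h
    exact hP.exists_complete hnk hkn
  refine ⟨(n + 1) / 2, by lia, by lia, ?_⟩
  interval_cases n
  · exact ⟨ofRows 1 [[0]], by decide +kernel⟩
  · exact ⟨ofRows 2 [[0, 1]], by decide +kernel⟩
  · exact ⟨ofRows 3 [[0, 1, 2], [2, 0, 1]], by decide +kernel⟩
  · exact ⟨ofRows 4 [[0, 1, 2, 3], [2, 3, 0, 1]], by decide +kernel⟩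
  · exact ⟨ofRows 5 [[0, 1, 2, 3, 4], [4, 3, 1, 2, 0], [3, 2, 0, 4, 1]], by decide +kernel⟩
  · exact ⟨ofRows 6 [[0, 1, 2, 3, 4, 5], [3, 5, 4, 1, 0, 2], [2, 4, 0, 5, 1, 3]],
      by decide +kernel⟩
  · exact ⟨ofRows 7 [[0, 1, 2, 3, 4, 5, 6], [6, 3, 4, 5, 1, 0, 2], [4, 0, 5, 2, 6, 1, 3],
      [5, 2, 6, 0, 3, 4, 1]], by decide +kernel⟩
  · exact ⟨ofRows 8 [[0, 1, 2, 3, 4, 5, 6, 7], [4, 5, 7, 6, 1, 3, 0, 2],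
      [6, 3, 0, 7, 2, 4, 1, 5], [2, 7, 1, 0, 5, 6, 4, 3]], by decide +kernel⟩
  · exact ⟨ofRows 9 [[0, 1, 2, 3, 4, 5, 6, 7, 8], [8, 4, 5, 6, 7, 0, 2, 3, 1],
      [7, 6, 3, 8, 2, 1, 5, 4, 0], [1, 5, 7, 4, 0, 6, 3, 8, 2], [3, 2, 8, 0, 1, 4, 7, 5, 6]],
      by decide +kernel⟩

theorem exists_isPartialLRPA (hn : 0 < n) : ∃ P : ℕ → Fin n → Fin n, IsPartialLRPA P n :=
  (lt_or_ge n 10).elim (exists_isPartialLRPA_of_lt_ten hn) exists_isPartialLRPA_of_ten_le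

end SmallOrders

section OneIndexed

variable {P : ℕ → Fin n → Fin n}

theorem exists_fin_of_mem_Icc {s : ℕ} (hs : s ∈ Icc 1 n) : ∃ x : Fin n, (x : ℕ) + 1 = s := by
  rw [mem_Icc] at hs
  exact ⟨⟨s - 1, by lia⟩, by simp only; lia⟩

theorem Covers.exists_mem_Icc {i s : ℕ} (hP : Covers P i) (hi : 0 < i) (hs : s ∈ Icc 1 n) :
    ∃ r, ∃ c : Fin n,
      r + 1 ∈ Icc 1 i ∧ (c : ℕ) + 1 ∈ Icc 1 ((n + i - 1) / i) ∧ (P r c : ℕ) + 1 = s := by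
  obtain ⟨x, rfl⟩ := exists_fin_of_mem_Icc hs
  obtain ⟨r, hr, c, hc, rfl⟩ := hP x
  refine ⟨r, c, mem_Icc.mpr ⟨r.succ_pos, hr⟩, mem_Icc.mpr ⟨Nat.succ_pos _, ?_⟩, rfl⟩
  rw [Nat.le_div_iff_mul_le hi, add_one_mul]
  lia

variable [NeZero n]

/-- The array `P` with rows, columns and symbols numbered from `1`. -/
def oneIndexed (P : ℕ → Fin n → Fin n) (i j : ℕ) : ℕ := P (i - 1) (Fin.ofNat n (j - 1)) + 1

theorem oneIndexed_succ (r : ℕ) (c : Fin n) : oneIndexed P (r + 1) (c + 1) = P r c + 1 := by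
  rw [oneIndexed, Nat.add_sub_cancel, Nat.add_sub_cancel, Fin.ofNat_val_eq_self]

theorem oneIndexed_mirror_succ (r : ℕ) (c : Fin n) :
    oneIndexed P (r + 1) (n + 1 - (c + 1)) = mirror P r c + 1 := by
  rw [mirror, ← oneIndexed_succ, Fin.val_rev]
  congr 1
  lia

theorem oneIndexed_mem_Icc (i j : ℕ) : oneIndexed P i j ∈ Icc 1 n :=
  mem_Icc.mpr ⟨Nat.le_add_left _ _, Fin.is_lt _⟩

theorem IsLatinRect.bijOn_row (hP : IsLatinRect P n) {i : ℕ} (hi : i ∈ Icc 1 n) :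
    Set.BijOn (oneIndexed P i) ↑(Icc 1 n) ↑(Icc 1 n) := by
  refine ((finite_toSet _).injOn_iff_bijOn_of_mapsTo fun j _ => oneIndexed_mem_Icc i j).mp
    fun j hj j' hj' h => ?_
  obtain ⟨r, rfl⟩ := exists_fin_of_mem_Icc hi
  obtain ⟨c, rfl⟩ := exists_fin_of_mem_Icc hj
  obtain ⟨d, rfl⟩ := exists_fin_of_mem_Icc hj'
  simp only [oneIndexed_succ, Nat.add_right_cancel_iff] at h
  rw [hP.row_injective r r.is_lt (Fin.ext h)]

theorem IsLatinRect.bijOn_column (hP : IsLatinRect P n) {j : ℕ} (hj : j ∈ Icc 1 n) :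
    Set.BijOn (fun i => oneIndexed P i j) ↑(Icc 1 n) ↑(Icc 1 n) := by
  refine ((finite_toSet _).injOn_iff_bijOn_of_mapsTo fun i _ => oneIndexed_mem_Icc i j).mp
    fun i hi i' hi' h => ?_
  obtain ⟨c, rfl⟩ := exists_fin_of_mem_Icc hj
  obtain ⟨r, rfl⟩ := exists_fin_of_mem_Icc hi
  obtain ⟨s, rfl⟩ := exists_fin_of_mem_Icc hi'
  simp only [oneIndexed_succ, Nat.add_right_cancel_iff] at h
  rw [hP.col_injOn c r.is_lt s.is_lt (Fin.ext h)]

theorem Covers.exists_oneIndexed_left {i s : ℕ} (hP : Covers P i) (hi : 0 < i) (hs : s ∈ Icc 1 n) :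
    ∃ r ∈ Icc 1 i, ∃ c ∈ Icc 1 ((n + i - 1) / i), oneIndexed P r c = s := by
  obtain ⟨r, c, hr, hc, hx⟩ := hP.exists_mem_Icc hi hs
  exact ⟨r + 1, hr, c + 1, hc, (oneIndexed_succ r c).trans hx⟩

theorem Covers.exists_oneIndexed_right {i s : ℕ} (hP : Covers (mirror P) i) (hi : 0 < i)
    (hs : s ∈ Icc 1 n) :
    ∃ r ∈ Icc 1 i, ∃ c ∈ Icc 1 ((n + i - 1) / i), oneIndexed P r (n + 1 - c) = s := by
  obtain ⟨r, c, hr, hc, hx⟩ := hP.exists_mem_Icc hi hs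
  exact ⟨r + 1, hr, c + 1, hc, (oneIndexed_mirror_succ r c).trans hx⟩

end OneIndexed

end LRPA

/-- For every positive integer `n` there exists a type-1,2 latin retransmission
permutation array of order `n`: a latin square of order `n` (each row and each
column a permutation of `{1,…,n}`) such that for each `1 ≤ i ≤ n` the
`i × ⌈n/i⌉` rectangles in the top-left and top-right corners contain all `n`
symbols.  Here `⌈n/i⌉ = (n + i - 1) / i`. -/
theorem exists_type12_LRPA (n : ℕ) (hn : 0 < n) :
    ∃ A : ℕ → ℕ → ℕ,
      (∀ i ∈ Finset.Icc 1 n,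
        Set.BijOn (A i) ↑(Finset.Icc 1 n) ↑(Finset.Icc 1 n)) ∧
      (∀ j ∈ Finset.Icc 1 n,
        Set.BijOn (fun i => A i j) ↑(Finset.Icc 1 n) ↑(Finset.Icc 1 n)) ∧
      (∀ i ∈ Finset.Icc 1 n, ∀ s ∈ Finset.Icc 1 n,
        (∃ r ∈ Finset.Icc 1 i, ∃ c ∈ Finset.Icc 1 ((n + i - 1) / i),
            A r c = s) ∧
        (∃ r ∈ Finset.Icc 1 i, ∃ c ∈ Finset.Icc 1 ((n + i - 1) / i),
            A r (n + 1 - c) = s)) := by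
  have : NeZero n := ⟨hn.ne'⟩
  obtain ⟨P, hP⟩ := LRPA.exists_isPartialLRPA hn
  refine ⟨LRPA.oneIndexed P, fun i hi => hP.isLatinRect.bijOn_row hi,
    fun j hj => hP.isLatinRect.bijOn_column hj, fun i hi s hs => ?_⟩
  obtain ⟨hi, hin⟩ := Finset.mem_Icc.mp hi
  exact ⟨(hP.left i hi hin).exists_oneIndexed_left hi hs,
    (hP.right i hi hin).exists_oneIndexed_right hi hs⟩
end
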